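/- In the free energy expansion F_N(t) = Σ_G s(G) N^{F(G) − (3/2)b(G)} (−t)^{b(G)} of the O(N)^3 tetrahedral tensor model, the exponent of N satisfies F(G) − (3/2)b(G) ≤ 3 for all connected graphs G, with equality exactly for melonic graphs; the next largest exponent is 5/2, attained exactly by melon-decorated double tadpoles. -/

import Mathlib

/-!  A combinatorial model of the Feynman graphs of the rank-3 tetrahedral
(`O(N)^3`) tensor model.

A graph consists of a finite set `B` of bubbles (copies of the tetrahedron
`K_4`); each bubble has four vertices, so the vertex set is `B × Fin 4`.
Inside every bubble the edges of colors `1,2,3` are given once and for all by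
the three fixed-point-free involutions of `Fin 4` (the proper 3-edge-coloring
of `K_4`).  The color-0 propagator edges, one per vertex, are encoded by a
fixed-point-free involution `pairing` of the vertex set. -/

open Equiv

/-- The color-`c` (for `c ∈ {1,2,3}`, here `c : Fin 3`) perfect matching on the
four vertices of a tetrahedral bubble. -/
def bubblePerm : Fin 3 → Equiv.Perm (Fin 4) :=
  ![Equiv.swap 0 1 * Equiv.swap 2 3,
    Equiv.swap 0 2 * Equiv.swap 1 3,
    Equiv.swap 0 3 * Equiv.swap 1 2]

/-- A Feynman graph of the tetrahedral tensor model: a finite set of `K_4`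
bubbles together with a fixed-point-free involution of the vertex set
describing the color-0 edges. -/
structure TGraph where
  B : Type
  [fintypeB : Fintype B]
  [decB : DecidableEq B]
  pairing : Equiv.Perm (B × Fin 4)
  invol : ∀ v, pairing (pairing v) = v
  fixfree : ∀ v, pairing v ≠ v

attribute [instance] TGraph.fintypeB TGraph.decB

namespace TGraph

/-- The vertex set of a graph. -/
abbrev V (G : TGraph) : Type := G.B × Fin 4

/-- The permutation of the vertices given by the color-`c` edges inside the
bubbles. -/
def colPerm (G : TGraph) (c : Fin 3) : Equiv.Perm G.V :=
  (Equiv.refl G.B).prodCongr (bubblePerm c)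

/-- The number of bubbles of a graph. -/
def b (G : TGraph) : ℕ := Fintype.card G.B

/-- The subgroup of permutations of the vertices generated by the color-0
pairing and the color-`c` matching: its orbits are exactly the faces of
color `c` (cycles alternating colors `0` and `c`). -/
def faceGroup (G : TGraph) (c : Fin 3) : Subgroup (Equiv.Perm G.V) :=
  Subgroup.closure {G.pairing, G.colPerm c}

/-- Two vertices lie on the same face of color `c`. -/
def sameFace (G : TGraph) (c : Fin 3) (u v : G.V) : Prop :=
  u ∈ MulAction.orbit (G.faceGroup c) v

/-- The number of faces of color `c` of the graph. -/
noncomputable def numFaces (G : TGraph) (c : Fin 3) : ℕ :=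
  Nat.card (MulAction.orbitRel.Quotient (G.faceGroup c) G.V)

/-- The total number of faces of the graph. -/
noncomputable def F (G : TGraph) : ℕ := ∑ c : Fin 3, G.numFaces c

/-- The length of the face of color `c` through the vertex `v` (a face of
length `n` consists of `n` color-0 edges and `n` color-`c` edges, hence `2n`
vertices). -/
noncomputable def faceLength (G : TGraph) (c : Fin 3) (v : G.V) : ℕ :=
  Nat.card (MulAction.orbit (G.faceGroup c) v) / 2

/-- The subgroup generated by all edges of the graph. -/
def fullGroup (G : TGraph) : Subgroup (Equiv.Perm G.V) :=
  Subgroup.closure ({G.pairing} ∪ Set.range G.colPerm)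

/-- A graph is connected if any vertex can be reached from any other one along
its edges. -/
def Connected (G : TGraph) : Prop :=
  ∀ u v : G.V, u ∈ MulAction.orbit G.fullGroup v

/-- One step along an edge of the graph avoiding the color-0 edges whose
endpoints belong to `S`. -/
def stepAvoiding (G : TGraph) (S : Set G.V) (u v : G.V) : Prop :=
  (∃ c, v = G.colPerm c u) ∨ (v = G.pairing u ∧ u ∉ S ∧ v ∉ S)

/-- Reachability in the graph with the color-0 edges meeting `S` removed. -/
def reachAvoiding (G : TGraph) (S : Set G.V) : G.V → G.V → Prop :=
  Relation.ReflTransGen (G.stepAvoiding S)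

/-- The pair of color-0 edges through the vertices `u` and `w` disconnects the
graph when removed.  Together with the requirement that the two edges be
distinct, this is the notion of a 2-edge-cut of color-0 edges. -/
def CutDisconnects (G : TGraph) (u w : G.V) : Prop :=
  ¬ ∀ x y : G.V, G.reachAvoiding {u, G.pairing u, w, G.pairing w} x y

/-- Two vertices are connected by a 2-point function if they are joined by a
color-0 edge, or if their two (distinct) color-0 edges form a 2-edge-cut. -/
def TwoPoint (G : TGraph) (x y : G.V) : Prop :=
  G.pairing x = y ∨ (y ≠ x ∧ y ≠ G.pairing x ∧ G.CutDisconnects x y)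

/-- The flip of the two color-0 edges `{u, pairing u}` and `{w, pairing w}`
(assumed distinct) which reconnects `u` with `w` (and `pairing u` with
`pairing w`): the pairing is conjugated by the transposition exchanging
`pairing u` and `w`.  The other flip of this pair of edges is
`G.flip u (G.pairing w)`. -/
def flip (G : TGraph) (u w : G.V) : TGraph where
  B := G.B
  pairing := Equiv.swap (G.pairing u) w * G.pairing * Equiv.swap (G.pairing u) w
  invol := by
    intro v
    simp only [Equiv.Perm.mul_apply, Equiv.swap_apply_self, G.invol]
  fixfree := by
    intro v h
    simp only [Equiv.Perm.mul_apply] at h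
    have h' : G.pairing (Equiv.swap (G.pairing u) w v) = Equiv.swap (G.pairing u) w v := by
      have := congrArg (Equiv.swap (G.pairing u) w) h
      simpa using this
    exact G.fixfree _ h'

/-- The face of color `c` through the color-0 edge `{v, pairing v}` has
length 2 (it consists of this edge, a color-`c` edge, a second color-0 edge
and a second color-`c` edge closing the cycle). -/
def FaceLen2 (G : TGraph) (c : Fin 3) (v : G.V) : Prop :=
  G.pairing v ≠ G.colPerm c v ∧
    G.pairing (G.colPerm c (G.pairing v)) = G.colPerm c v

/-- A proper face of length 2 of color `c` through `v`: a face of length 2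
whose two color-0 edges connect two distinct bubbles. -/
def ProperFace2 (G : TGraph) (c : Fin 3) (v : G.V) : Prop :=
  G.FaceLen2 c v ∧ (G.pairing v).1 ≠ v.1

/-- A graph maximizes the number of faces if it is connected and no connected
graph with the same number of bubbles has more faces. -/
def MaximizesFaces (G : TGraph) : Prop :=
  G.Connected ∧ ∀ H : TGraph, H.Connected → H.b = G.b → H.F ≤ G.F

/-- Isomorphisms of graphs: bijections of the vertex sets commuting with the
color-0 pairing and with the colored matchings inside the bubbles. -/
structure Iso (G H : TGraph) where
  toEquiv : G.V ≃ H.V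
  map_pairing : ∀ v, toEquiv (G.pairing v) = H.pairing (toEquiv v)
  map_col : ∀ c v, toEquiv (G.colPerm c v) = H.colPerm c (toEquiv v)

/-- Two graphs are isomorphic. -/
def IsIso (G H : TGraph) : Prop := Nonempty (Iso G H)

end TGraph

open TGraph

/-- The leading-order two-bubble graph `G_2`: two tetrahedral bubbles with
corresponding vertices joined by four color-0 edges, so that all six faces
have length 2. -/
def G2 : TGraph where
  B := Fin 2
  pairing := (Equiv.swap (0 : Fin 2) 1).prodCongr (Equiv.refl (Fin 4))
  invol := by
    rintro ⟨i, k⟩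
    simp [Equiv.prodCongr_apply, Equiv.swap_apply_self]
  fixfree := by
    rintro ⟨i, k⟩ h
    have hi : Equiv.swap (0 : Fin 2) 1 i = i := congrArg Prod.fst h
    fin_cases i <;> simp_all

/-- The double tadpole `G_1^{(c)}`: one tetrahedral bubble whose two color-0
edges each join two vertices already adjacent by an edge of color `c`. -/
def G1 (c : Fin 3) : TGraph where
  B := Fin 1
  pairing := (Equiv.refl (Fin 1)).prodCongr (bubblePerm c)
  invol := by
    rintro ⟨i, k⟩
    have hk : ∀ j : Fin 4, bubblePerm c (bubblePerm c j) = j := by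
      fin_cases c <;> decide
    simp [Equiv.prodCongr_apply, hk]
  fixfree := by
    rintro ⟨i, k⟩ h
    have hk : bubblePerm c k = k := congrArg Prod.snd h
    have hne : ∀ j : Fin 4, bubblePerm c j ≠ j := by
      fin_cases c <;> decide
    exact hne k hk

namespace TGraph

variable (H K : TGraph)

/-- The image of a vertex of `H` in the glued graph. -/
def inlV (x : H.V) : (H.B ⊕ K.B) × Fin 4 := (Sum.inl x.1, x.2)

/-- The image of a vertex of `K` in the glued graph. -/
def inrV (y : K.V) : (H.B ⊕ K.B) × Fin 4 := (Sum.inr y.1, y.2)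

/-- The underlying function of the pairing of the graph obtained by gluing `H`
and `K` along the color-0 edges `{p, H.pairing p}` and `{q, K.pairing q}`:
these two edges are cut and the half-edges are reglued as `p — q` and
`H.pairing p — K.pairing q`.  The new pair of edges is a 2-edge-cut of the
resulting graph when `H` and `K` are connected. -/
def glueFun (p : H.V) (q : K.V) : (H.B ⊕ K.B) × Fin 4 → (H.B ⊕ K.B) × Fin 4 :=
  fun z =>
    match z with
    | (Sum.inl u, k) =>
        if (u, k) = p then inrV H K q
        else if (u, k) = H.pairing p then inrV H K (K.pairing q)
        else inlV H K (H.pairing (u, k))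
    | (Sum.inr u, k) =>
        if (u, k) = q then inlV H K p
        else if (u, k) = K.pairing q then inlV H K (H.pairing p)
        else inrV H K (K.pairing (u, k))

theorem glueFun_inlV (p : H.V) (q : K.V) (x : H.V) :
    glueFun H K p q (inlV H K x) =
      if x = p then inrV H K q
      else if x = H.pairing p then inrV H K (K.pairing q)
      else inlV H K (H.pairing x) := by
  cases x
  rfl

theorem glueFun_inrV (p : H.V) (q : K.V) (y : K.V) :
    glueFun H K p q (inrV H K y) =
      if y = q then inlV H K p
      else if y = K.pairing q then inlV H K (H.pairing p)
      else inrV H K (K.pairing y) := by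
  cases y
  rfl

theorem inlV_injective : Function.Injective (inlV H K) := by
  rintro ⟨u, k⟩ ⟨u', k'⟩ h
  have h1 : (Sum.inl u : H.B ⊕ K.B) = Sum.inl u' := congrArg Prod.fst h
  have h2 : k = k' := congrArg Prod.snd h
  exact Prod.ext (Sum.inl_injective h1) h2

theorem inrV_injective : Function.Injective (inrV H K) := by
  rintro ⟨u, k⟩ ⟨u', k'⟩ h
  have h1 : (Sum.inr u : H.B ⊕ K.B) = Sum.inr u' := congrArg Prod.fst h
  have h2 : k = k' := congrArg Prod.snd h
  exact Prod.ext (Sum.inr_injective h1) h2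

theorem inlV_ne_inrV (x : H.V) (y : K.V) : inlV H K x ≠ inrV H K y := by
  intro h
  exact Sum.inl_ne_inr (congrArg Prod.fst h)

theorem glueFun_invol_inl (p : H.V) (q : K.V) (x : H.V) :
    glueFun H K p q (glueFun H K p q (inlV H K x)) = inlV H K x := by
  rw [glueFun_inlV]
  by_cases h1 : x = p
  · rw [if_pos h1, glueFun_inrV, if_pos rfl, h1]
  · by_cases h2 : x = H.pairing p
    · rw [if_neg h1, if_pos h2, glueFun_inrV,
        if_neg (fun h => K.fixfree q h), if_pos rfl, h2]
    · have hne1 : H.pairing x ≠ p := by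
        intro h; apply h2
        have := congrArg H.pairing h
        rw [H.invol] at this; exact this
      have hne2 : H.pairing x ≠ H.pairing p := fun h => h1 (H.pairing.injective h)
      rw [if_neg h1, if_neg h2, glueFun_inlV, if_neg hne1, if_neg hne2, H.invol]

theorem glueFun_invol_inr (p : H.V) (q : K.V) (y : K.V) :
    glueFun H K p q (glueFun H K p q (inrV H K y)) = inrV H K y := by
  rw [glueFun_inrV]
  by_cases h1 : y = q
  · rw [if_pos h1, glueFun_inlV, if_pos rfl, h1]
  · by_cases h2 : y = K.pairing q
    · rw [if_neg h1, if_pos h2, glueFun_inlV,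
        if_neg (fun h => H.fixfree p h), if_pos rfl, h2]
    · have hne1 : K.pairing y ≠ q := by
        intro h; apply h2
        have := congrArg K.pairing h
        rw [K.invol] at this; exact this
      have hne2 : K.pairing y ≠ K.pairing q := fun h => h1 (K.pairing.injective h)
      rw [if_neg h1, if_neg h2, glueFun_inrV, if_neg hne1, if_neg hne2, K.invol]

theorem glueFun_involutive (p : H.V) (q : K.V) :
    Function.Involutive (glueFun H K p q) := by
  rintro ⟨(u | u), k⟩
  · exact glueFun_invol_inl H K p q (u, k)
  · exact glueFun_invol_inr H K p q (u, k)

theorem glueFun_fixfree (p : H.V) (q : K.V) :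
    ∀ z, glueFun H K p q z ≠ z := by
  have hl : ∀ x : H.V, glueFun H K p q (inlV H K x) ≠ inlV H K x := by
    intro x h
    rw [glueFun_inlV] at h
    by_cases h1 : x = p
    · rw [if_pos h1] at h
      exact inlV_ne_inrV H K x q h.symm
    · by_cases h2 : x = H.pairing p
      · rw [if_neg h1, if_pos h2] at h
        exact inlV_ne_inrV H K x (K.pairing q) h.symm
      · rw [if_neg h1, if_neg h2] at h
        exact H.fixfree x (inlV_injective H K h)
  have hr : ∀ y : K.V, glueFun H K p q (inrV H K y) ≠ inrV H K y := by
    intro y h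
    rw [glueFun_inrV] at h
    by_cases h1 : y = q
    · rw [if_pos h1] at h
      exact inlV_ne_inrV H K p y h
    · by_cases h2 : y = K.pairing q
      · rw [if_neg h1, if_pos h2] at h
        exact inlV_ne_inrV H K (H.pairing p) y h
      · rw [if_neg h1, if_neg h2] at h
        exact K.fixfree y (inrV_injective H K h)
  rintro ⟨(u | u), k⟩
  · exact hl (u, k)
  · exact hr (u, k)

/-- Gluing two graphs along a pair of color-0 edges.  When `H` and `K` are
connected, the two new color-0 edges form a 2-edge-cut of the glued graph, and
conversely every connected graph with a color-0 2-edge-cut arises this way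
from the two closed graphs obtained by cutting the two edges and closing each
side. -/
def glue (p : H.V) (q : K.V) : TGraph where
  B := H.B ⊕ K.B
  pairing := (glueFun_involutive H K p q).toPerm
  invol := fun v => glueFun_involutive H K p q v
  fixfree := fun v => glueFun_fixfree H K p q v

/-- Insertion of a melonic dipole (the 2-point graph obtained by cutting one
color-0 edge of `G_2`) on the color-0 edge `{v, G.pairing v}` of `G`. -/
def insertDipole (G : TGraph) (v : G.V) : TGraph :=
  glue G G2 v ((0 : Fin 2), (0 : Fin 4))

end TGraph

open TGraph

/-- Melonic graphs (up to isomorphism): `G_2` is melonic, and inserting a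
melonic dipole on any color-0 edge of a melonic graph yields a melonic
graph. -/
inductive IsMelonic : TGraph → Prop
  | base {G : TGraph} (h : IsIso G G2) : IsMelonic G
  | insert {G : TGraph} (hG : IsMelonic G) (v : G.V) {H : TGraph}
      (h : IsIso H (G.insertDipole v)) : IsMelonic H

/-- Double tadpoles decorated with melonic 2-point functions (up to
isomorphism): these are exactly the graphs obtained from one of the double
tadpoles `G_1^{(c)}` by repeatedly inserting melonic dipoles on color-0 edges,
i.e. double tadpoles whose two color-0 edges are replaced by melonic 2-point
functions. -/
inductive IsDecoratedTadpole : TGraph → Prop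
  | base {G : TGraph} (c : Fin 3) (h : IsIso G (G1 c)) : IsDecoratedTadpole G
  | insert {G : TGraph} (hG : IsDecoratedTadpole G) (v : G.V) {H : TGraph}
      (h : IsIso H (G.insertDipole v)) : IsDecoratedTadpole H

namespace TGraph

theorem bubblePerm_invol (c : Fin 3) (k : Fin 4) : bubblePerm c (bubblePerm c k) = k := by
  revert c k; decide

theorem bubblePerm_ne (c : Fin 3) (k : Fin 4) : bubblePerm c k ≠ k := by
  revert c k; decide

theorem bubblePerm_bubblePerm {c d e : Fin 3} (hcd : c ≠ d) (hce : c ≠ e) (hde : d ≠ e)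
    (k : Fin 4) : bubblePerm c (bubblePerm d k) = bubblePerm e k := by
  revert c d e k; decide

theorem eq_or_eq_bubblePerm (k l : Fin 4) : l = k ∨ ∃ c, l = bubblePerm c k := by
  revert k l; decide

/-- The proper two-coloring of the four-cycle of a bubble whose diagonals have color `e`. -/
theorem exists_bubble_twoColoring (e : Fin 3) : ∃ ε : Fin 4 → ZMod 2,
    (∀ c, c ≠ e → ∀ k, ε (bubblePerm c k) = ε k + 1) ∧ ∀ k, ε (bubblePerm e k) = ε k := by
  refine ⟨fun k => if k = 0 ∨ k = bubblePerm e 0 then 0 else 1, ?_, ?_⟩ <;> revert e <;> decide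

section Basic

variable (G : TGraph)

theorem colPerm_apply (c : Fin 3) (v : G.V) : G.colPerm c v = (v.1, bubblePerm c v.2) := rfl

theorem colPerm_invol (c : Fin 3) (v : G.V) : G.colPerm c (G.colPerm c v) = v := by
  simp [colPerm_apply, bubblePerm_invol]

theorem colPerm_ne (c : Fin 3) (v : G.V) : G.colPerm c v ≠ v := fun h =>
  bubblePerm_ne c v.2 (congrArg Prod.snd h)

theorem colPerm_colPerm {c d e : Fin 3} (hcd : c ≠ d) (hce : c ≠ e) (hde : d ≠ e)
    (v : G.V) : G.colPerm c (G.colPerm d v) = G.colPerm e v := by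
  simp [colPerm_apply, bubblePerm_bubblePerm hcd hce hde]

theorem eq_or_eq_colPerm {u v : G.V} (h : u.1 = v.1) : u = v ∨ ∃ c, u = G.colPerm c v := by
  rcases eq_or_eq_bubblePerm v.2 u.2 with h2 | ⟨c, h2⟩
  · exact Or.inl (Prod.ext h h2)
  · exact Or.inr ⟨c, Prod.ext h h2⟩

theorem card_V : Fintype.card G.V = 4 * G.b := by
  simp [b, mul_comm]

/-- A graph is connected if and only if no nonempty proper set of vertices is closed under
following edges. -/
theorem connected_iff : G.Connected ↔ ∀ P : G.V → Prop, (∀ v, P v → P (G.pairing v)) →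
    (∀ c v, P v → P (G.colPerm c v)) → ∀ u v, P u → P v := by
  constructor
  · intro h P hp hc u v hu
    obtain ⟨⟨g, hg⟩, rfl⟩ := h v u
    have key : ∀ x, P x ↔ P (g x) := by
      refine Subgroup.closure_induction (p := fun g _ => ∀ x, P x ↔ P (g x)) ?_ ?_ ?_ ?_ hg
      · rintro g (rfl | ⟨c, rfl⟩) x
        · exact ⟨hp x, fun h => by simpa [G.invol] using hp _ h⟩
        · exact ⟨hc c x, fun h => by simpa [G.colPerm_invol] using hc c _ h⟩
      · simp
      · intro a b _ _ ha hb x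
        rw [hb x, ha (b x)]; rfl
      · intro a _ ha x
        rw [ha (a⁻¹ x)]; simp
    exact (key u).1 hu
  · intro h u v
    refine h (fun x => x ∈ MulAction.orbit G.fullGroup v) ?_ ?_ v u (MulAction.mem_orbit_self v)
    · rintro x ⟨g, rfl⟩
      exact ⟨⟨G.pairing, Subgroup.subset_closure (Or.inl rfl)⟩ * g, mul_smul _ _ _⟩
    · rintro c x ⟨g, rfl⟩
      exact ⟨⟨G.colPerm c, Subgroup.subset_closure (Or.inr ⟨c, rfl⟩)⟩ * g, mul_smul _ _ _⟩

/-- The `ZMod 2`-valued functions on the vertices that are constant along the faces of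
color `c`. -/
def faceFun (c : Fin 3) : Submodule (ZMod 2) (G.V → ZMod 2) where
  carrier := {f | (∀ v, f (G.pairing v) = f v) ∧ ∀ v, f (G.colPerm c v) = f v}
  add_mem' := by
    rintro f g ⟨hf, hf'⟩ ⟨hg, hg'⟩
    exact ⟨fun v => by simp [hf v, hg v], fun v => by simp [hf' v, hg' v]⟩
  zero_mem' := ⟨fun _ => rfl, fun _ => rfl⟩
  smul_mem' := by
    rintro a f ⟨hf, hf'⟩
    exact ⟨fun v => by simp [hf v], fun v => by simp [hf' v]⟩

theorem mem_faceFun {c : Fin 3} {f : G.V → ZMod 2} : f ∈ G.faceFun c ↔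
    (∀ v, f (G.pairing v) = f v) ∧ ∀ v, f (G.colPerm c v) = f v := Iff.rfl

theorem pairing_mem_faceGroup (c : Fin 3) : G.pairing ∈ G.faceGroup c :=
  Subgroup.subset_closure (Or.inl rfl)

theorem colPerm_mem_faceGroup (c : Fin 3) : G.colPerm c ∈ G.faceGroup c :=
  Subgroup.subset_closure (Or.inr rfl)

theorem faceFun_smul {c : Fin 3} {f : G.V → ZMod 2} (hf : f ∈ G.faceFun c)
    (g : G.faceGroup c) (v : G.V) : f (g • v) = f v := by
  obtain ⟨g, hg⟩ := g
  change f (g v) = f v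
  revert v
  refine Subgroup.closure_induction (p := fun g _ => ∀ v, f (g v) = f v) ?_ ?_ ?_ ?_ hg
  · rintro g (rfl | rfl) x
    · exact hf.1 x
    · exact hf.2 x
  · simp
  · intro a b _ _ ha hb x
    rw [Equiv.Perm.mul_apply, ha, hb]
  · intro a _ ha x
    rw [← ha (a⁻¹ x)]; simp

theorem finrank_faceFun (c : Fin 3) : Module.finrank (ZMod 2) (G.faceFun c) = G.numFaces c := by
  classical
  let Q := MulAction.orbitRel.Quotient (G.faceGroup c) G.V
  have : Fintype Q := Fintype.ofFinite _
  have hinv : ∀ (y : Q → ZMod 2), (fun v => y (Quotient.mk'' v)) ∈ G.faceFun c := by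
    intro y
    refine ⟨fun v => congrArg y ?_, fun v => congrArg y ?_⟩
    · exact Quotient.sound' ⟨⟨_, G.pairing_mem_faceGroup c⟩, rfl⟩
    · exact Quotient.sound' ⟨⟨_, G.colPerm_mem_faceGroup c⟩, rfl⟩
  let L : (Q → ZMod 2) →ₗ[ZMod 2] G.faceFun c :=
    { toFun := fun y => ⟨_, hinv y⟩
      map_add' := fun _ _ => rfl
      map_smul' := fun _ _ => rfl }
  have hL : Function.Bijective L := by
    constructor
    · intro y y' h
      funext q
      induction q using Quotient.inductionOn' with
      | h v => exact congrFun (congrArg Subtype.val h) v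
    · rintro ⟨f, hf⟩
      refine ⟨fun q => Quotient.liftOn' q f ?_, rfl⟩
      rintro _ v ⟨g, rfl⟩
      exact G.faceFun_smul hf g v
  rw [← (LinearEquiv.ofBijective L hL).finrank_eq, Module.finrank_fintype_fun_eq_card,
    ← Nat.card_eq_fintype_card]
  rfl

theorem F_eq : G.F = ∑ c, Module.finrank (ZMod 2) (G.faceFun c) := by
  simp [F, finrank_faceFun]

end Basic

section Planarity

theorem zmod_two_add_self (a : ZMod 2) : a + a = 0 := by
  revert a; decide

theorem zmod_two_eq_of_add_eq_zero {a b : ZMod 2} (h : a + b = 0) : a = b := by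
  revert a b; decide

theorem sum_eq_zero_of_involution {α : Type*} [Fintype α] {τ : α → α} (hτ : ∀ v, τ (τ v) = v)
    (hne : ∀ v, τ v ≠ v) {f : α → ZMod 2} (hf : ∀ v, f (τ v) = f v) : ∑ v, f v = 0 :=
  Finset.sum_ninvolution τ (fun v => by rw [hf, zmod_two_add_self]) (fun v _ => hne v)
    (fun _ => Finset.mem_univ _) hτ

/-- A function that changes its value along an involution takes the value `1` on exactly half of
every invariant set. -/
theorem two_mul_card_filter_of_involution {α : Type*} {τ : α → α} (hτ : ∀ v, τ (τ v) = v)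
    {g : α → ZMod 2} (hg : ∀ v, g (τ v) = g v + 1) (S : Finset α) (hS : ∀ v ∈ S, τ v ∈ S) :
    2 * (S.filter fun v => g v = 1).card = S.card := by
  have h2 : ∀ a : ZMod 2, a = 1 ↔ ¬ (a + 1 = 1) := by decide
  have h1 : (S.filter fun v => g v = 1).card = (S.filter fun v => ¬ g v = 1).card := by
    refine Finset.card_bij' (fun v _ => τ v) (fun v _ => τ v) ?_ ?_ (fun v _ => hτ v)
      (fun v _ => hτ v)
    · intro v hv
      rw [Finset.mem_filter] at hv ⊢
      exact ⟨hS v hv.1, by rw [hg]; exact (h2 _).1 hv.2⟩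
    · intro v hv
      rw [Finset.mem_filter] at hv ⊢
      refine ⟨hS v hv.1, (h2 _).2 ?_⟩
      rw [← hg, hτ]
      exact hv.2
  have := Finset.card_filter_add_card_filter_not (s := S) (fun v => g v = 1)
  omega

theorem sum_mul_eq_sum_mul {α : Type*} [Fintype α] {τ τ' : α → α}
    (hτ : ∀ v, τ (τ v) = v) (hτ' : ∀ v, τ' (τ' v) = v) {f g g' : α → ZMod 2}
    (hf : ∀ v, f (τ v) = f v) (hf' : ∀ v, f (τ' v) = f v)
    (hg : ∀ v, g (τ v) = g v + 1) (hg' : ∀ v, g' (τ' v) = g' v + 1) :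
    ∑ v, f v * g v = ∑ v, f v * g' v := by
  classical
  have key : ∀ h : α → ZMod 2, ∑ v, f v * h v =
      (((Finset.univ.filter fun v => f v = 1).filter fun v => h v = 1).card : ZMod 2) := by
    intro h
    rw [Finset.card_eq_sum_ones, Finset.filter_filter, Finset.sum_filter]
    push_cast
    refine Finset.sum_congr rfl fun v _ => ?_
    generalize f v = a
    generalize h v = c
    revert a c; decide
  have e1 := two_mul_card_filter_of_involution hτ hg (Finset.univ.filter fun v => f v = 1)
    (fun v hv => by simpa [hf] using hv)
  have e2 := two_mul_card_filter_of_involution hτ' hg' (Finset.univ.filter fun v => f v = 1)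
    (fun v hv => by simpa [hf'] using hv)
  rw [key, key]
  congr 1
  omega

theorem finrank_le_one_of_constant {α : Type*} [Nonempty α] [Finite α]
    (S : Submodule (ZMod 2) (α → ZMod 2)) (h : ∀ f ∈ S, ∀ u v, f u = f v) :
    Module.finrank (ZMod 2) S ≤ 1 := by
  let u : α := Classical.arbitrary α
  have := LinearMap.finrank_le_finrank_of_injective
    (f := (LinearMap.proj u : (α → ZMod 2) →ₗ[ZMod 2] ZMod 2).comp S.subtype) (by
      rintro ⟨f, hf⟩ ⟨g, hg⟩ hfg
      ext v
      have e : f u = g u := hfg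
      change f v = g v
      rw [h f hf v u, h g hg v u, e])
  simpa using this

variable (G : TGraph)

/-- The functions on the vertices that are constant along the color-0 edges. -/
def edgeFun : Submodule (ZMod 2) (G.V → ZMod 2) :=
  LinearMap.ker (LinearMap.id + LinearMap.funLeft (ZMod 2) (ZMod 2) G.pairing)

/-- The functions on the vertices that are constant on the bubbles. -/
def bubbleFun : Submodule (ZMod 2) (G.V → ZMod 2) :=
  LinearMap.range (LinearMap.funLeft (ZMod 2) (ZMod 2) (Prod.fst : G.V → G.B))

theorem mem_edgeFun {f : G.V → ZMod 2} : f ∈ G.edgeFun ↔ ∀ v, f (G.pairing v) = f v := by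
  rw [edgeFun, LinearMap.mem_ker]
  constructor
  · intro h v
    exact (zmod_two_eq_of_add_eq_zero (congrFun h v)).symm
  · intro h
    funext v
    change f v + f (G.pairing v) = 0
    rw [h, zmod_two_add_self]

theorem mem_bubbleFun {f : G.V → ZMod 2} (hf : f ∈ G.bubbleFun) (c : Fin 3) (v : G.V) :
    f (G.colPerm c v) = f v := by
  obtain ⟨s, rfl⟩ := hf
  rfl

theorem two_mul_b_le_finrank_edgeFun : 2 * G.b ≤ Module.finrank (ZMod 2) G.edgeFun := by
  let L := LinearMap.id + LinearMap.funLeft (ZMod 2) (ZMod 2) G.pairing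
  have h : Module.finrank (ZMod 2) (LinearMap.range L) + Module.finrank (ZMod 2) G.edgeFun =
      Module.finrank (ZMod 2) (G.V → ZMod 2) := LinearMap.finrank_range_add_finrank_ker L
  have hle : LinearMap.range L ≤ G.edgeFun := by
    rintro _ ⟨f, rfl⟩
    rw [mem_edgeFun]
    intro v
    change f (G.pairing v) + f (G.pairing (G.pairing v)) = f v + f (G.pairing v)
    rw [G.invol, add_comm]
  have h2 : Module.finrank (ZMod 2) (LinearMap.range L) ≤ Module.finrank (ZMod 2) G.edgeFun :=
    Submodule.finrank_mono hle
  rw [Module.finrank_fintype_fun_eq_card, card_V] at h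
  omega

theorem finrank_bubbleFun : Module.finrank (ZMod 2) G.bubbleFun = G.b := by
  rw [bubbleFun, LinearMap.finrank_range_of_inj, Module.finrank_fintype_fun_eq_card, b]
  exact LinearMap.funLeft_injective_of_surjective _ _ _ Prod.fst_surjective

variable {G}

theorem Connected.eq_of_invariant (hG : G.Connected) {f : G.V → ZMod 2}
    (hp : ∀ v, f (G.pairing v) = f v) (hc : ∀ c v, f (G.colPerm c v) = f v) (u v : G.V) :
    f u = f v :=
  (G.connected_iff.1 hG (fun x => f u = f x) (fun x hx => by rw [hp, hx])
    (fun c x hx => by rw [hc, hx]) u v rfl)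

theorem finrank_edgeFun_sup_bubbleFun [Nonempty G.B] (hG : G.Connected) :
    3 * G.b ≤ Module.finrank (ZMod 2) ↥(G.edgeFun ⊔ G.bubbleFun) + 1 := by
  have h := Submodule.finrank_sup_add_finrank_inf_eq G.edgeFun G.bubbleFun
  have h1 : Module.finrank (ZMod 2) ↥(G.edgeFun ⊓ G.bubbleFun) ≤ 1 :=
    finrank_le_one_of_constant _ fun f hf => hG.eq_of_invariant (G.mem_edgeFun.1 hf.1)
      (G.mem_bubbleFun hf.2)
  have h2 := G.two_mul_b_le_finrank_edgeFun
  rw [finrank_bubbleFun] at h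
  omega

theorem finrank_faceFun_sup_faceFun [Nonempty G.B] (hG : G.Connected) {c d e : Fin 3}
    (hcd : c ≠ d) (hce : c ≠ e) (hde : d ≠ e) :
    Module.finrank (ZMod 2) (G.faceFun c) + Module.finrank (ZMod 2) (G.faceFun d) ≤
      Module.finrank (ZMod 2) ↥(G.faceFun c ⊔ G.faceFun d) + 1 := by
  have h := Submodule.finrank_sup_add_finrank_inf_eq (G.faceFun c) (G.faceFun d)
  have h1 : Module.finrank (ZMod 2) ↥(G.faceFun c ⊓ G.faceFun d) ≤ 1 := by
    refine finrank_le_one_of_constant _ fun f hf => hG.eq_of_invariant hf.1.1 fun i v => ?_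
    have hi : i = c ∨ i = d ∨ i = e := by omega
    rcases hi with rfl | rfl | rfl
    · exact hf.1.2 v
    · exact hf.2.2 v
    · rw [← G.colPerm_colPerm hcd hce hde, hf.1.2, hf.2.2]
  omega

variable (G)

/-- The standard bilinear form on the functions on the vertices. -/
noncomputable def dotForm : LinearMap.BilinForm (ZMod 2) (G.V → ZMod 2) :=
  Matrix.toBilin' (1 : Matrix G.V G.V (ZMod 2))

theorem dotForm_apply (f g : G.V → ZMod 2) : G.dotForm f g = ∑ v, f v * g v := by
  simp [dotForm, Matrix.toBilin'_apply', dotProduct]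

theorem dotForm_nondegenerate : G.dotForm.Nondegenerate :=
  LinearMap.BilinForm.nondegenerate_toBilin'_of_det_ne_zero' _ (by simp)

theorem edgeFun_sup_bubbleFun_le (c d : Fin 3) : G.edgeFun ⊔ G.bubbleFun ≤
    G.dotForm.orthogonal (G.faceFun c ⊔ G.faceFun d) := by
  have key : ∀ i, G.faceFun i ≤ G.dotForm.flip.orthogonal (G.edgeFun ⊔ G.bubbleFun) := by
    intro i f hf g hg
    obtain ⟨x, hx, y, hy, rfl⟩ := Submodule.mem_sup.1 hg
    have e1 : G.dotForm f x = 0 := by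
      rw [dotForm_apply]
      exact sum_eq_zero_of_involution G.invol G.fixfree
        fun v => by rw [hf.1, G.mem_edgeFun.1 hx]
    have e2 : G.dotForm f y = 0 := by
      rw [dotForm_apply]
      exact sum_eq_zero_of_involution (G.colPerm_invol i) (G.colPerm_ne i)
        fun v => by rw [hf.2, G.mem_bubbleFun hy]
    change G.dotForm f (x + y) = 0
    rw [map_add, e1, e2, add_zero]
  intro x hx f hf
  exact (sup_le (key c) (key d) : _) hf x hx

variable {G}

/-- Nonnegativity of the genus of a jacket. -/
theorem Connected.finrank_faceFun_add_le [Nonempty G.B] (hG : G.Connected) {c d e : Fin 3}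
    (hcd : c ≠ d) (hce : c ≠ e) (hde : d ≠ e) :
    Module.finrank (ZMod 2) (G.faceFun c) + Module.finrank (ZMod 2) (G.faceFun d) ≤ G.b + 2 := by
  have h1 := finrank_edgeFun_sup_bubbleFun hG
  have h2 := finrank_faceFun_sup_faceFun hG hcd hce hde
  have h3 := Submodule.finrank_mono (G.edgeFun_sup_bubbleFun_le c d)
  have h4 := LinearMap.BilinForm.finrank_orthogonal G.dotForm_nondegenerate
    (G.faceFun c ⊔ G.faceFun d)
  have h5 := Submodule.finrank_le (G.faceFun c ⊔ G.faceFun d)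
  rw [Module.finrank_fintype_fun_eq_card, card_V] at h4 h5
  omega

/-- A planar jacket is orientable. -/
theorem Connected.exists_twoColoring [Nonempty G.B] (hG : G.Connected) {c d e : Fin 3}
    (hcd : c ≠ d) (hce : c ≠ e) (hde : d ≠ e)
    (h : Module.finrank (ZMod 2) (G.faceFun c) + Module.finrank (ZMod 2) (G.faceFun d) =
      G.b + 2) :
    ∃ s : G.V → ZMod 2, (∀ v, s (G.pairing v) = s v + 1) ∧ ∀ v, s (G.colPerm e v) = s v := by
  have h1 := finrank_edgeFun_sup_bubbleFun hG
  have h2 := finrank_faceFun_sup_faceFun hG hcd hce hde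
  have h3 := G.edgeFun_sup_bubbleFun_le c d
  have h4 := LinearMap.BilinForm.finrank_orthogonal G.dotForm_nondegenerate
    (G.faceFun c ⊔ G.faceFun d)
  have h5 := Submodule.finrank_le (G.faceFun c ⊔ G.faceFun d)
  rw [Module.finrank_fintype_fun_eq_card, card_V] at h4 h5
  have heq := Submodule.eq_of_le_of_finrank_le h3 (by omega)
  obtain ⟨ε, hε, hεe⟩ := exists_bubble_twoColoring e
  let ι := Fintype.equivFin G.V
  let r : G.V → ZMod 2 := fun v => if ι v < ι (G.pairing v) then 1 else 0
  have hr : ∀ v, r (G.pairing v) = r v + 1 := by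
    intro v
    have hne : ι (G.pairing v) ≠ ι v := fun h => G.fixfree v (ι.injective h)
    simp only [r, G.invol]
    rcases lt_or_gt_of_ne hne with h | h
    · rw [if_pos h, if_neg h.not_gt, zero_add]
    · rw [if_neg h.not_gt, if_pos h, zmod_two_add_self]
  have hmem : (fun v => ε v.2 + r v) ∈ G.edgeFun ⊔ G.bubbleFun := by
    rw [heq]
    have key : ∀ i, i ≠ e → ∀ f ∈ G.faceFun i, G.dotForm f (fun v => ε v.2 + r v) = 0 := by
      intro i hi f hf
      have := sum_mul_eq_sum_mul (G.colPerm_invol i) G.invol hf.2 hf.1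
        (g := fun v => ε v.2) (fun v => hε i hi v.2) hr
      rw [dotForm_apply]
      simp only [mul_add, Finset.sum_add_distrib]
      rw [this, zmod_two_add_self]
    intro f hf
    obtain ⟨x, hx, y, hy, rfl⟩ := Submodule.mem_sup.1 hf
    change G.dotForm (x + y) _ = 0
    rw [map_add, LinearMap.add_apply, key c hce x hx, key d hde y hy, add_zero]
  obtain ⟨x, hx, y, hy, hxy⟩ := Submodule.mem_sup.1 hmem
  refine ⟨fun v => ε v.2 + y v, fun v => ?_, fun v => ?_⟩
  · have e1 := congrFun hxy v
    have e2 := congrFun hxy (G.pairing v)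
    have e3 := G.mem_edgeFun.1 hx v
    have e4 := hr v
    simp only [Pi.add_apply] at e1 e2
    change ε (G.pairing v).2 + y (G.pairing v) = ε v.2 + y v + 1
    rw [e3, e4] at e2
    have key : ∀ a b a' b' i r : ZMod 2,
        i + b' = a' + (r + 1) → i + b = a + r → a' + b' = a + b + 1 := by decide
    exact key _ _ _ _ _ _ e2 e1
  · change ε (bubblePerm e v.2) + y (G.colPerm e v) = ε v.2 + y v
    rw [hεe, G.mem_bubbleFun hy]

/-- In a graph with an orientable jacket, if there are many faces of the remaining color then
one of them has length two. -/
theorem exists_pairing_colPerm [Nonempty G.B] {c : Fin 3} {s : G.V → ZMod 2}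
    (hp : ∀ v, s (G.pairing v) = s v + 1) (hc : ∀ v, s (G.colPerm c v) = s v)
    (h : G.b + 1 ≤ 2 * G.numFaces c) :
    ∃ v, G.pairing (G.colPerm c v) = G.colPerm c (G.pairing v) := by
  classical
  by_contra! hne
  let Q := MulAction.orbitRel.Quotient (G.faceGroup c) G.V
  have : Fintype Q := Fintype.ofFinite _
  let m : G.V → Q := Quotient.mk''
  have hmp : ∀ v, m (G.pairing v) = m v := fun v =>
    Quotient.sound' ⟨⟨_, G.pairing_mem_faceGroup c⟩, rfl⟩
  have hmc : ∀ v, m (G.colPerm c v) = m v := fun v =>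
    Quotient.sound' ⟨⟨_, G.colPerm_mem_faceGroup c⟩, rfl⟩
  have h8 : 8 * (Finset.univ : Finset Q).card ≤ (Finset.univ : Finset G.V).card := by
    refine Finset.mul_card_image_le_card_of_maps_to (f := m) (fun _ _ => Finset.mem_univ _) 8 ?_
    intro q _
    induction q using Quotient.inductionOn' with
    | h v =>
    have hsum : ∀ a : ZMod 2, a + a + 1 = 1 := by decide
    have hsum' : ∀ a : ZMod 2, a + 1 + 1 + a + 1 = 1 := by decide
    have hT : ({v, G.colPerm c v, G.pairing (G.colPerm c (G.pairing v)),
        G.pairing (G.colPerm c (G.pairing (G.colPerm c v)))} : Finset G.V).card = 4 := by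
      have n1 : v ≠ G.colPerm c v := (G.colPerm_ne c v).symm
      have n2 : v ≠ G.pairing (G.colPerm c (G.pairing v)) := fun h =>
        G.colPerm_ne c (G.pairing v) (G.pairing.injective (by rw [← h, G.invol]))
      have n3 : v ≠ G.pairing (G.colPerm c (G.pairing (G.colPerm c v))) := fun h =>
        hne v ((G.colPerm c).injective (by
          rw [G.colPerm_invol]
          nth_rewrite 2 [h]
          rw [G.invol]))
      have n4 : G.colPerm c v ≠ G.pairing (G.colPerm c (G.pairing v)) := fun h =>
        hne v (G.pairing.injective (by rw [← h, G.invol]))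
      have n5 : G.colPerm c v ≠ G.pairing (G.colPerm c (G.pairing (G.colPerm c v))) := fun h =>
        G.colPerm_ne c _ (G.pairing.injective (by rw [← h, G.invol]))
      have n6 : G.pairing (G.colPerm c (G.pairing v)) ≠
          G.pairing (G.colPerm c (G.pairing (G.colPerm c v))) := fun h =>
        n1 (G.pairing.injective ((G.colPerm c).injective (G.pairing.injective h)))
      rw [Finset.card_insert_of_notMem, Finset.card_insert_of_notMem, Finset.card_pair n6] <;>
        simp [*]
    refine le_of_le_of_eq ?_ (two_mul_card_filter_of_involution (τ := G.pairing)
      (g := fun x => s x + s v + 1) G.invol (fun x => by simp only [hp]; ring) _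
      (fun x hx => by simpa [hmp] using hx))
    refine le_trans (by rw [hT]) (Nat.mul_le_mul_left 2 (Finset.card_le_card (s := {v,
      G.colPerm c v, G.pairing (G.colPerm c (G.pairing v)),
        G.pairing (G.colPerm c (G.pairing (G.colPerm c v)))}) ?_))
    intro x hx
    simp only [Finset.mem_insert, Finset.mem_singleton] at hx
    rcases hx with rfl | rfl | rfl | rfl <;>
      simp only [Finset.mem_filter, Finset.mem_univ, true_and, hmp, hmc, hp, hc, hsum, hsum',
        and_true] <;> rfl
  have hcard : Fintype.card Q = G.numFaces c := (Nat.card_eq_fintype_card).symm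
  rw [Finset.card_univ, Finset.card_univ, hcard, card_V] at h8
  omega

end Planarity

section Flip

variable (G : TGraph)

theorem flip_pairing_apply (u w v : G.V) : (G.flip u w).pairing v =
    Equiv.swap (G.pairing u) w (G.pairing (Equiv.swap (G.pairing u) w v)) := rfl

variable {G} {u w : G.V}

theorem flip_pairing_left (huw : u ≠ w) : (G.flip u w).pairing u = w := by
  rw [flip_pairing_apply, Equiv.swap_apply_of_ne_of_ne (G.fixfree u).symm huw,
    Equiv.swap_apply_left]

theorem flip_pairing_right (huw : u ≠ w) : (G.flip u w).pairing w = u := by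
  rw [flip_pairing_apply, Equiv.swap_apply_right, G.invol,
    Equiv.swap_apply_of_ne_of_ne (G.fixfree u).symm huw]

theorem flip_pairing_pairing_left (huw : u ≠ w) :
    (G.flip u w).pairing (G.pairing u) = G.pairing w := by
  rw [flip_pairing_apply, Equiv.swap_apply_left,
    Equiv.swap_apply_of_ne_of_ne (fun h => huw (G.pairing.injective h.symm)) (G.fixfree w)]

theorem flip_pairing_pairing_right (huw : u ≠ w) :
    (G.flip u w).pairing (G.pairing w) = G.pairing u := by
  rw [flip_pairing_apply, Equiv.swap_apply_of_ne_of_ne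
    (fun h => huw (G.pairing.injective h.symm)) (G.fixfree w), G.invol, Equiv.swap_apply_right]

theorem flip_pairing_of_ne {v : G.V} (h1 : v ≠ u) (h2 : v ≠ w) (h3 : v ≠ G.pairing u)
    (h4 : v ≠ G.pairing w) : (G.flip u w).pairing v = G.pairing v := by
  rw [flip_pairing_apply, Equiv.swap_apply_of_ne_of_ne h3 h2,
    Equiv.swap_apply_of_ne_of_ne (fun h => h1 (G.pairing.injective h))
      (fun h => h4 (by rw [← h, G.invol]))]

theorem mem_faceFun_flip (huw : u ≠ w) {c : Fin 3} {f : G.V → ZMod 2} (hf : f ∈ G.faceFun c)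
    (h : f u = f w) : f ∈ (G.flip u w).faceFun c := by
  refine ⟨fun (v : G.V) => ?_, hf.2⟩
  by_cases h1 : v = u
  · rw [h1, flip_pairing_left huw, h]
  by_cases h2 : v = w
  · rw [h2, flip_pairing_right huw, h]
  by_cases h3 : v = G.pairing u
  · rw [h3, flip_pairing_pairing_left huw, hf.1, hf.1, h]
  by_cases h4 : v = G.pairing w
  · rw [h4, flip_pairing_pairing_right huw, hf.1, hf.1, h]
  rw [flip_pairing_of_ne h1 h2 h3 h4, hf.1]

theorem finrank_le_finrank_inf_ker_add_one {E : Type*} [AddCommGroup E] [Module (ZMod 2) E]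
    [FiniteDimensional (ZMod 2) E] (W : Submodule (ZMod 2) E) (φ : E →ₗ[ZMod 2] ZMod 2) :
    Module.finrank (ZMod 2) W ≤ Module.finrank (ZMod 2) ↥(W ⊓ LinearMap.ker φ) + 1 := by
  have h1 := Submodule.finrank_sup_add_finrank_inf_eq W (LinearMap.ker φ)
  have h2 := LinearMap.finrank_range_add_finrank_ker φ
  have h3 := Submodule.finrank_le (LinearMap.range φ)
  have h4 := Submodule.finrank_le (W ⊔ LinearMap.ker φ)
  rw [Module.finrank_self] at h3
  omega

/-- A flip destroys at most one face of each color. -/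
theorem finrank_faceFun_le_flip (huw : u ≠ w) (c : Fin 3) :
    Module.finrank (ZMod 2) (G.faceFun c) ≤
      Module.finrank (ZMod 2) ((G.flip u w).faceFun c) + 1 := by
  refine (finrank_le_finrank_inf_ker_add_one (G.faceFun c)
    (LinearMap.proj (R := ZMod 2) (φ := fun _ : G.V => ZMod 2) u -
      LinearMap.proj (R := ZMod 2) (φ := fun _ : G.V => ZMod 2) w)).trans
    (Nat.add_le_add_right ?_ 1)
  refine Submodule.finrank_mono (s := G.faceFun c ⊓ _)
    (t := ((G.flip u w).faceFun c : Submodule (ZMod 2) (G.V → ZMod 2))) fun f hf => ?_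
  exact mem_faceFun_flip huw hf.1 (sub_eq_zero.1 hf.2)

/-- A flip that closes a face of length two creates a face. -/
theorem finrank_faceFun_lt_flip (huw : u ≠ w) (huw' : G.pairing u ≠ w) {c : Fin 3}
    (h : G.pairing (G.colPerm c u) = G.colPerm c w) :
    Module.finrank (ZMod 2) (G.faceFun c) + 1 ≤
      Module.finrank (ZMod 2) ((G.flip u w).faceFun c) := by
  have hle : G.faceFun c ≤ ((G.flip u w).faceFun c : Submodule (ZMod 2) (G.V → ZMod 2)) :=
    fun f hf => mem_faceFun_flip huw hf (by rw [← hf.2 u, ← hf.1, h, hf.2])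
  have h' : G.pairing (G.colPerm c w) = G.colPerm c u := by rw [← h, G.invol]
  have n1 : G.colPerm c u ≠ u := G.colPerm_ne c u
  have n2 : G.colPerm c w ≠ w := G.colPerm_ne c w
  have n3 : G.colPerm c u ≠ w := fun e => huw' (by
    rw [← G.invol w, ← e, h, ← e, G.colPerm_invol])
  have n4 : G.colPerm c w ≠ u := fun e => n3 (by rw [← e, G.colPerm_invol])
  have n5 : G.colPerm c u ≠ G.pairing u := fun e => n4 (by rw [← h, e, G.invol])
  have n6 : G.colPerm c u ≠ G.pairing w := fun e => n2 (by rw [← h, e, G.invol])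
  have n7 : G.colPerm c w ≠ G.pairing u := fun e => n1 (by rw [← h', e, G.invol])
  have n8 : G.colPerm c w ≠ G.pairing w := fun e => n3 (by rw [← h', e, G.invol])
  let f : G.V → ZMod 2 := fun v =>
    if v = u ∨ v = w ∨ v = G.colPerm c u ∨ v = G.colPerm c w then 1 else 0
  have hu : f u = 1 := if_pos (Or.inl rfl)
  have hpu : f (G.pairing u) = 0 := if_neg (by
    rintro (e | e | e | e)
    · exact G.fixfree u e
    · exact huw' e
    · exact n5 e.symm
    · exact n7 e.symm)
  have hpw : f (G.pairing w) = 0 := if_neg (by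
    rintro (e | e | e | e)
    · exact huw' (by rw [← e, G.invol])
    · exact G.fixfree w e
    · exact n6 e.symm
    · exact n8 e.symm)
  have hf : f ∈ ((G.flip u w).faceFun c : Submodule (ZMod 2) (G.V → ZMod 2)) := by
    refine ⟨fun (v : G.V) => ?_, fun (v : G.V) => ?_⟩
    · by_cases h1 : v = u
      · rw [h1, flip_pairing_left huw]; simp [f]
      by_cases h2 : v = w
      · rw [h2, flip_pairing_right huw]; simp [f]
      by_cases h3 : v = G.pairing u
      · rw [h3, flip_pairing_pairing_left huw, hpu, hpw]
      by_cases h4 : v = G.pairing w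
      · rw [h4, flip_pairing_pairing_right huw, hpu, hpw]
      rw [flip_pairing_of_ne h1 h2 h3 h4]
      have e1 : G.pairing v = u ↔ v = G.pairing u :=
        ⟨fun e => by rw [← e, G.invol], fun e => by rw [e, G.invol]⟩
      have e2 : G.pairing v = w ↔ v = G.pairing w :=
        ⟨fun e => by rw [← e, G.invol], fun e => by rw [e, G.invol]⟩
      have e3 : G.pairing v = G.colPerm c u ↔ v = G.colPerm c w := by
        rw [← h', G.pairing.injective.eq_iff]
      have e4 : G.pairing v = G.colPerm c w ↔ v = G.colPerm c u := by
        rw [← h, G.pairing.injective.eq_iff]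
      simp only [f, e1, e2, e3, e4, h1, h2, h3, h4, false_or]
      exact if_congr or_comm rfl rfl
    · change f (G.colPerm c v) = f v
      have e1 : ∀ x, G.colPerm c v = x ↔ v = G.colPerm c x := fun x =>
        ⟨fun e => by rw [← e, G.colPerm_invol], fun e => by rw [e, G.colPerm_invol]⟩
      simp only [f, e1, G.colPerm_invol]
      refine if_congr ?_ rfl rfl
      tauto
  refine Submodule.finrank_lt_finrank_of_lt (lt_of_le_of_ne hle fun e => ?_)
  have := ((e ▸ hf : f ∈ G.faceFun c).1 u)
  rw [hu, hpu] at this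
  exact zero_ne_one this

/-- Flipping two edges adjacent to a face of length two increases the number of faces. -/
theorem F_lt_F_flip {c d e : Fin 3} (hcd : c ≠ d) (hce : c ≠ e) (hde : d ≠ e) {v : G.V}
    (hv : G.pairing (G.colPerm c v) = G.colPerm c (G.pairing v))
    (hne : G.colPerm d v ≠ G.colPerm d (G.pairing v))
    (hne' : G.pairing (G.colPerm d v) ≠ G.colPerm d (G.pairing v)) :
    G.F + 1 ≤ (G.flip (G.colPerm d v) (G.colPerm d (G.pairing v))).F := by
  have h1 := finrank_faceFun_le_flip hne c
  have h2 := finrank_faceFun_lt_flip hne hne' (c := d)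
    (by rw [G.colPerm_invol, G.colPerm_invol])
  have h3 := finrank_faceFun_lt_flip hne hne' (c := e)
    (by rw [G.colPerm_colPerm hde.symm hce.symm hcd.symm,
      G.colPerm_colPerm hde.symm hce.symm hcd.symm, hv])
  have hsum : ∀ n : Fin 3 → ℕ, ∑ i, n i = n c + n d + n e := by
    intro n
    rw [Fin.sum_univ_three]
    have : ∀ c d e : Fin 3, c ≠ d → c ≠ e → d ≠ e → (c = 0 ∧ d = 1 ∧ e = 2) ∨
        (c = 0 ∧ d = 2 ∧ e = 1) ∨ (c = 1 ∧ d = 0 ∧ e = 2) ∨ (c = 1 ∧ d = 2 ∧ e = 0) ∨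
        (c = 2 ∧ d = 0 ∧ e = 1) ∨ (c = 2 ∧ d = 1 ∧ e = 0) := by decide
    rcases this c d e hcd hce hde with h | h | h | h | h | h <;>
      obtain ⟨rfl, rfl, rfl⟩ := h <;> ring
  rw [F_eq, F_eq, hsum, hsum]
  omega

end Flip

section Isomorphism

variable {G H K : TGraph}

/-- The identity isomorphism. -/
def Iso.refl (G : TGraph) : Iso G G := ⟨Equiv.refl _, fun _ => rfl, fun _ _ => rfl⟩

/-- The inverse of an isomorphism. -/
def Iso.symm (e : Iso G H) : Iso H G where
  toEquiv := e.toEquiv.symm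
  map_pairing v := e.toEquiv.injective (by
    rw [e.map_pairing, Equiv.apply_symm_apply, Equiv.apply_symm_apply])
  map_col c v := e.toEquiv.injective (by
    rw [e.map_col, Equiv.apply_symm_apply, Equiv.apply_symm_apply])

/-- The composition of two isomorphisms. -/
def Iso.trans (e : Iso G H) (e' : Iso H K) : Iso G K where
  toEquiv := e.toEquiv.trans e'.toEquiv
  map_pairing v := by simp [e.map_pairing, e'.map_pairing]
  map_col c v := by
    change e'.toEquiv (e.toEquiv _) = _
    rw [e.map_col, e'.map_col]; rfl

theorem IsIso.symm (h : IsIso G H) : IsIso H G := h.map Iso.symm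

theorem IsIso.trans (h : IsIso G H) (h' : IsIso H K) : IsIso G K :=
  h.elim fun e => h'.map e.trans

theorem IsIso.b_eq (h : IsIso G H) : G.b = H.b := by
  have := Fintype.card_congr h.some.toEquiv
  rw [card_V, card_V] at this
  omega

theorem IsIso.finrank_faceFun_le (h : IsIso G H) (c : Fin 3) :
    Module.finrank (ZMod 2) (H.faceFun c) ≤ Module.finrank (ZMod 2) (G.faceFun c) := by
  obtain ⟨e⟩ := h
  rw [← LinearEquiv.finrank_map_eq (LinearEquiv.funCongrLeft (ZMod 2) (ZMod 2) e.toEquiv)]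
  refine Submodule.finrank_mono ?_
  rintro _ ⟨f, hf, rfl⟩
  refine ⟨fun v => ?_, fun v => ?_⟩
  · change f (e.toEquiv _) = f (e.toEquiv v)
    rw [e.map_pairing, hf.1]
  · change f (e.toEquiv _) = f (e.toEquiv v)
    rw [e.map_col, hf.2]

theorem IsIso.F_eq (h : IsIso G H) : G.F = H.F := by
  rw [TGraph.F_eq, TGraph.F_eq]
  exact Finset.sum_congr rfl fun c _ =>
    le_antisymm (h.symm.finrank_faceFun_le c) (h.finrank_faceFun_le c)

end Isomorphism

section Glue

variable {H K : TGraph}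

/-- The inclusion of the vertices of the first graph in a glued graph. -/
def glueInl (p : H.V) (q : K.V) (x : H.V) : (glue H K p q).V := inlV H K x

/-- The inclusion of the vertices of the second graph in a glued graph. -/
def glueInr (p : H.V) (q : K.V) (y : K.V) : (glue H K p q).V := inrV H K y

theorem glueInl_injective (p : H.V) (q : K.V) : Function.Injective (glueInl p q) :=
  inlV_injective H K

theorem glueInr_injective (p : H.V) (q : K.V) : Function.Injective (glueInr p q) :=
  inrV_injective H K

theorem glueInl_ne_glueInr (p : H.V) (q : K.V) (x : H.V) (y : K.V) :
    glueInl p q x ≠ glueInr p q y :=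
  inlV_ne_inrV H K x y

theorem glue_pairing_glueInl (p : H.V) (q : K.V) (x : H.V) :
    (glue H K p q).pairing (glueInl p q x) =
      if x = p then glueInr p q q
      else if x = H.pairing p then glueInr p q (K.pairing q)
      else glueInl p q (H.pairing x) := glueFun_inlV H K p q x

theorem glue_pairing_glueInr (p : H.V) (q : K.V) (y : K.V) :
    (glue H K p q).pairing (glueInr p q y) =
      if y = q then glueInl p q p
      else if y = K.pairing q then glueInl p q (H.pairing p)
      else glueInr p q (K.pairing y) := glueFun_inrV H K p q y

theorem glue_colPerm_glueInl (p : H.V) (q : K.V) (c : Fin 3) (x : H.V) :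
    (glue H K p q).colPerm c (glueInl p q x) = glueInl p q (H.colPerm c x) := rfl

theorem glue_colPerm_glueInr (p : H.V) (q : K.V) (c : Fin 3) (y : K.V) :
    (glue H K p q).colPerm c (glueInr p q y) = glueInr p q (K.colPerm c y) := rfl

theorem forall_glue_V {p : H.V} {q : K.V} {P : (glue H K p q).V → Prop} :
    (∀ z, P z) ↔ (∀ x, P (glueInl p q x)) ∧ ∀ y, P (glueInr p q y) :=
  ⟨fun h => ⟨fun _ => h _, fun _ => h _⟩, fun h z => match z with
    | (Sum.inl u, k) => h.1 (u, k)
    | (Sum.inr u, k) => h.2 (u, k)⟩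

theorem b_glue (p : H.V) (q : K.V) : (glue H K p q).b = H.b + K.b := Fintype.card_sum

/-- The function on the vertices of a glued graph with prescribed restrictions. -/
def glueElim {α : Type*} (p : H.V) (q : K.V) (f : H.V → α) (g : K.V → α) :
    (glue H K p q).V → α
  | (Sum.inl u, k) => f (u, k)
  | (Sum.inr u, k) => g (u, k)

theorem glueElim_glueInl {α : Type*} (p : H.V) (q : K.V) (f : H.V → α) (g : K.V → α)
    (x : H.V) : glueElim p q f g (glueInl p q x) = f x := rfl

theorem glueElim_glueInr {α : Type*} (p : H.V) (q : K.V) (f : H.V → α) (g : K.V → α)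
    (y : K.V) : glueElim p q f g (glueInr p q y) = g y := rfl

theorem glueElim_injective {α : Type*} {p : H.V} {q : K.V} {f : H.V → α} {g : K.V → α}
    (hf : Function.Injective f) (hg : Function.Injective g) (hfg : ∀ x y, f x ≠ g y) :
    Function.Injective (glueElim p q f g) := by
  refine forall_glue_V.2 ⟨fun x => forall_glue_V.2 ⟨fun x' h => ?_, fun y h => ?_⟩,
    fun y => forall_glue_V.2 ⟨fun x h => ?_, fun y' h => ?_⟩⟩
  · exact congrArg _ (hf h)
  · exact (hfg _ _ h).elim
  · exact (hfg _ _ h.symm).elim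
  · exact congrArg _ (hg h)

/-- A function that is constant along the faces of color `c` except possibly across one color-0
edge takes the same value at both ends of that edge. -/
theorem eq_of_constant_off_edge {G : TGraph} {c : Fin 3} {f : G.V → ZMod 2} {a : G.V}
    (hc : ∀ v, f (G.colPerm c v) = f v)
    (hp : ∀ v, v ≠ a → v ≠ G.pairing a → f (G.pairing v) = f v) : f (G.pairing a) = f a := by
  have h1 : ∑ v, f v = 0 := sum_eq_zero_of_involution (G.colPerm_invol c) (G.colPerm_ne c) hc
  have h2 : ∑ v, (if v = a ∨ v = G.pairing a then 0 else f v) = 0 := by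
    refine sum_eq_zero_of_involution G.invol G.fixfree fun v => ?_
    have e1 : G.pairing v = a ↔ v = G.pairing a :=
      ⟨fun e => by rw [← e, G.invol], fun e => by rw [e, G.invol]⟩
    simp only [e1, G.pairing.injective.eq_iff]
    by_cases ha : v = a <;> by_cases hb : v = G.pairing a <;> simp [ha, hb, hp]
  have h3 : ∑ v, f v = ∑ v, (if v = a ∨ v = G.pairing a then 0 else f v) +
      ∑ v, ((if v = a then f v else 0) + if v = G.pairing a then f v else 0) := by
    rw [← Finset.sum_add_distrib]
    refine Finset.sum_congr rfl fun v _ => ?_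
    by_cases ha : v = a
    · have hb : a ≠ G.pairing a := (G.fixfree a).symm
      simp [ha, hb]
    · by_cases hb : v = G.pairing a <;> simp [ha, hb, G.fixfree]
  rw [h1, h2, Finset.sum_add_distrib, Finset.sum_ite_eq', Finset.sum_ite_eq'] at h3
  simp only [Finset.mem_univ, if_true, zero_add] at h3
  exact (zmod_two_eq_of_add_eq_zero h3.symm).symm

theorem glueElim_mem_faceFun {p : H.V} {q : K.V} {c : Fin 3} {f : H.V → ZMod 2}
    {g : K.V → ZMod 2} : glueElim p q f g ∈ (glue H K p q).faceFun c ↔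
      f ∈ H.faceFun c ∧ g ∈ K.faceFun c ∧ f p = g q := by
  simp only [mem_faceFun, forall_glue_V, glue_pairing_glueInl, glue_pairing_glueInr,
    glue_colPerm_glueInl, glue_colPerm_glueInr, apply_ite (glueElim p q f g), glueElim_glueInl,
    glueElim_glueInr]
  constructor
  · rintro ⟨⟨h1, h2⟩, h3, h4⟩
    have e1 : f (H.pairing p) = f p := eq_of_constant_off_edge h3 fun v ha hb => by
      simpa [ha, hb] using h1 v
    have e2 : g (K.pairing q) = g q := eq_of_constant_off_edge h4 fun v ha hb => by
      simpa [ha, hb] using h2 v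
    refine ⟨⟨fun v => ?_, h3⟩, ⟨fun v => ?_, h4⟩, ?_⟩
    · by_cases ha : v = p
      · rw [ha, e1]
      by_cases hb : v = H.pairing p
      · rw [hb, H.invol, e1]
      simpa [ha, hb] using h1 v
    · by_cases ha : v = q
      · rw [ha, e2]
      by_cases hb : v = K.pairing q
      · rw [hb, K.invol, e2]
      simpa [ha, hb] using h2 v
    · simpa using (h1 p).symm
  · rintro ⟨⟨h1, h3⟩, ⟨h2, h4⟩, h⟩
    refine ⟨⟨fun v => ?_, fun v => ?_⟩, h3, h4⟩
    · split_ifs with ha hb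
      · rw [ha, h]
      · rw [hb, h1, h2, h]
      · exact h1 v
    · split_ifs with ha hb
      · rw [ha, h]
      · rw [hb, h1, h2, h]
      · exact h2 v

/-- Gluing merges two faces of each color. -/
theorem finrank_faceFun_glue (p : H.V) (q : K.V) (c : Fin 3) :
    Module.finrank (ZMod 2) ((glue H K p q).faceFun c) + 1 =
      Module.finrank (ZMod 2) (H.faceFun c) + Module.finrank (ZMod 2) (K.faceFun c) := by
  let φ : (H.faceFun c × K.faceFun c) →ₗ[ZMod 2] ZMod 2 :=
    ((LinearMap.proj p).comp (H.faceFun c).subtype).comp (LinearMap.fst _ _ _) -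
      ((LinearMap.proj q).comp (K.faceFun c).subtype).comp (LinearMap.snd _ _ _)
  have hφ : ∀ f g, φ (f, g) = f.1 p - g.1 q := fun _ _ => rfl
  have hsurj : Function.Surjective φ := fun a =>
    ⟨(⟨fun _ => a, fun _ => rfl, fun _ => rfl⟩, 0), by simp [hφ]⟩
  let L : LinearMap.ker φ →ₗ[ZMod 2] (glue H K p q).faceFun c :=
    { toFun := fun x => ⟨glueElim p q x.1.1.1 x.1.2.1, glueElim_mem_faceFun.2
        ⟨x.1.1.2, x.1.2.2, sub_eq_zero.1 x.2⟩⟩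
      map_add' := fun x y => Subtype.ext (funext (forall_glue_V.2 ⟨fun _ => rfl, fun _ => rfl⟩))
      map_smul' := fun a x =>
        Subtype.ext (funext (forall_glue_V.2 ⟨fun _ => rfl, fun _ => rfl⟩)) }
  have hL : Function.Bijective L := by
    constructor
    · rintro ⟨⟨⟨f, hf⟩, ⟨g, hg⟩⟩, h⟩ ⟨⟨⟨f', hf'⟩, ⟨g', hg'⟩⟩, h'⟩ hh
      have e : glueElim p q f g = glueElim p q f' g' := congrArg Subtype.val hh
      have e1 : f = f' := funext fun x => congrFun e (glueInl p q x)
      have e2 : g = g' := funext fun x => congrFun e (glueInr p q x)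
      subst e1 e2
      rfl
    · rintro ⟨f, hf⟩
      have e : glueElim p q (fun x => f (glueInl p q x)) (fun y => f (glueInr p q y)) = f :=
        funext (forall_glue_V.2 ⟨fun _ => rfl, fun _ => rfl⟩)
      have hf' := glueElim_mem_faceFun.1 (e.symm ▸ hf :
        glueElim p q (fun x => f (glueInl p q x)) (fun y => f (glueInr p q y)) ∈ (glue H K p q).faceFun c)
      exact ⟨⟨(⟨_, hf'.1⟩, ⟨_, hf'.2.1⟩), sub_eq_zero.2 hf'.2.2⟩, Subtype.ext e⟩
  have h := LinearMap.finrank_range_add_finrank_ker φ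
  rw [LinearMap.range_eq_top.2 hsurj, finrank_top, Module.finrank_self,
    (LinearEquiv.ofBijective L hL).finrank_eq, Module.finrank_prod] at h
  omega

theorem F_glue (p : H.V) (q : K.V) : (glue H K p q).F + 3 = H.F + K.F := by
  simp only [F_eq, Fin.sum_univ_three]
  have := finrank_faceFun_glue p q 0
  have := finrank_faceFun_glue p q 1
  have := finrank_faceFun_glue p q 2
  omega

theorem exists_iso_glue_of_maps {M : TGraph} {p : H.V} {q : K.V} (fl : H.V → M.V) (fr : K.V → M.V)
    (hl : Function.Injective fl) (hr : Function.Injective fr) (hlr : ∀ x y, fl x ≠ fr y)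
    (hb : M.b = H.b + K.b) (hcl : ∀ c x, fl (H.colPerm c x) = M.colPerm c (fl x))
    (hcr : ∀ c y, fr (K.colPerm c y) = M.colPerm c (fr y))
    (hp : M.pairing (fl p) = fr q) (hp' : M.pairing (fl (H.pairing p)) = fr (K.pairing q))
    (hpl : ∀ x, x ≠ p → x ≠ H.pairing p → M.pairing (fl x) = fl (H.pairing x))
    (hpr : ∀ y, y ≠ q → y ≠ K.pairing q → M.pairing (fr y) = fr (K.pairing y)) :
    ∃ e : Iso (glue H K p q) M, ∀ y, e.toEquiv (glueInr p q y) = fr y := by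
  have hbij : Function.Bijective (glueElim p q fl fr) := by
    refine (Fintype.bijective_iff_injective_and_card _).2 ⟨glueElim_injective hl hr hlr, ?_⟩
    rw [card_V, card_V, hb, b_glue]
  refine ⟨⟨Equiv.ofBijective _ hbij, forall_glue_V.2 ⟨fun x => ?_, fun y => ?_⟩,
    fun c => forall_glue_V.2 ⟨hcl c, hcr c⟩⟩, fun _ => rfl⟩
  · simp only [Equiv.ofBijective_apply, glue_pairing_glueInl, apply_ite (glueElim p q fl fr),
      glueElim_glueInl, glueElim_glueInr]
    split_ifs with h1 h2
    · rw [h1, hp]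
    · rw [h2, hp']
    · rw [hpl x h1 h2]
  · simp only [Equiv.ofBijective_apply, glue_pairing_glueInr, apply_ite (glueElim p q fl fr),
      glueElim_glueInl, glueElim_glueInr]
    split_ifs with h1 h2
    · rw [h1, ← hp, M.invol]
    · rw [h2, ← hp', M.invol]
    · rw [hpr y h1 h2]

theorem isIso_glue_of_maps {M : TGraph} {p : H.V} {q : K.V} (fl : H.V → M.V) (fr : K.V → M.V)
    (hl : Function.Injective fl) (hr : Function.Injective fr) (hlr : ∀ x y, fl x ≠ fr y)
    (hb : M.b = H.b + K.b) (hcl : ∀ c x, fl (H.colPerm c x) = M.colPerm c (fl x))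
    (hcr : ∀ c y, fr (K.colPerm c y) = M.colPerm c (fr y))
    (hp : M.pairing (fl p) = fr q) (hp' : M.pairing (fl (H.pairing p)) = fr (K.pairing q))
    (hpl : ∀ x, x ≠ p → x ≠ H.pairing p → M.pairing (fl x) = fl (H.pairing x))
    (hpr : ∀ y, y ≠ q → y ≠ K.pairing q → M.pairing (fr y) = fr (K.pairing y)) :
    IsIso (glue H K p q) M :=
  (exists_iso_glue_of_maps fl fr hl hr hlr hb hcl hcr hp hp' hpl hpr).nonempty

theorem isIso_glue_congr {H' K' : TGraph} (e : Iso H H') (e' : Iso K K') (p : H.V) (q : K.V) :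
    IsIso (glue H K p q) (glue H' K' (e.toEquiv p) (e'.toEquiv q)) := by
  refine isIso_glue_of_maps (fun x => glueInl _ _ (e.toEquiv x))
    (fun y => glueInr _ _ (e'.toEquiv y)) ((glueInl_injective _ _).comp e.toEquiv.injective)
    ((glueInr_injective _ _).comp e'.toEquiv.injective) (fun _ _ => glueInl_ne_glueInr _ _ _ _)
    ?_ (fun c x => by rw [e.map_col, glue_colPerm_glueInl])
    (fun c y => by rw [e'.map_col, glue_colPerm_glueInr]) ?_ ?_ ?_ ?_
  · rw [b_glue, IsIso.b_eq ⟨e⟩, IsIso.b_eq ⟨e'⟩]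
  · rw [glue_pairing_glueInl, if_pos rfl]
  · rw [glue_pairing_glueInl, e.map_pairing, if_neg (H'.fixfree _), if_pos rfl, e'.map_pairing]
  · intro x h1 h2
    rw [glue_pairing_glueInl, ← e.map_pairing, if_neg (e.toEquiv.injective.ne h1),
      if_neg (e.toEquiv.injective.ne h2), e.map_pairing]
  · intro y h1 h2
    rw [glue_pairing_glueInr, ← e'.map_pairing, if_neg (e'.toEquiv.injective.ne h1),
      if_neg (e'.toEquiv.injective.ne h2), e'.map_pairing]

theorem exists_iso_glue_comm (p : H.V) (q : K.V) :
    ∃ e : Iso (glue H K p q) (glue K H q p), ∀ y, e.toEquiv (glueInr p q y) = glueInl q p y := by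
  refine exists_iso_glue_of_maps (glueInr q p) (glueInl q p) (glueInr_injective _ _)
    (glueInl_injective _ _) (fun _ _ => (glueInl_ne_glueInr _ _ _ _).symm) ?_
    (fun _ _ => rfl) (fun _ _ => rfl) ?_ ?_ ?_ ?_
  · rw [b_glue, add_comm]
  · rw [glue_pairing_glueInr, if_pos rfl]
  · rw [glue_pairing_glueInr, if_neg (H.fixfree _), if_pos rfl]
  · intro x h1 h2
    rw [glue_pairing_glueInr, if_neg h1, if_neg h2]
  · intro x h1 h2
    rw [glue_pairing_glueInl, if_neg h1, if_neg h2]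

/-- Exchanging the roles of the two ends of the edges along which two graphs are glued. -/
theorem exists_iso_glue_swap (p : H.V) (q : K.V) :
    ∃ e : Iso (glue H K p q) (glue H K (H.pairing p) (K.pairing q)),
      ∀ x, e.toEquiv (glueInl p q x) = glueInl _ _ x := by
  refine ⟨⟨Equiv.refl _, forall_glue_V.2 ⟨fun x => ?_, fun y => ?_⟩, fun _ _ => rfl⟩,
    fun _ => rfl⟩
  · refine Eq.trans ?_ (glue_pairing_glueInl (H.pairing p) (K.pairing q) x).symm
    refine (glue_pairing_glueInl p q x).trans ?_
    rw [H.invol, K.invol]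
    by_cases h1 : x = p
    · rw [if_pos h1, if_neg (h1 ▸ (H.fixfree p).symm), if_pos h1]; rfl
    · rw [if_neg h1, if_neg h1]; rfl
  · refine Eq.trans ?_ (glue_pairing_glueInr (H.pairing p) (K.pairing q) y).symm
    refine (glue_pairing_glueInr p q y).trans ?_
    rw [H.invol, K.invol]
    by_cases h1 : y = q
    · rw [if_pos h1, if_neg (h1 ▸ (K.fixfree q).symm), if_pos h1]; rfl
    · rw [if_neg h1, if_neg h1]; rfl

theorem isIso_glue_assoc_of_ne {L : TGraph} (q : L.V) {x v : H.V} (hx : x ≠ v) (r : K.V) :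
    IsIso (glue L (glue H K v r) q (glueInl v r x))
      (glue (glue L H q x) K (glueInr q x v) r) := by
  have hinl := glueInl_injective (glueInr q x v) r
  have hinr := glueInr_injective (glueInr q x v) r
  have hne := glueInl_ne_glueInr (glueInr q x v) r
  have hinl' := glueInl_injective q x
  have hinr' := glueInr_injective q x
  have hne' := glueInl_ne_glueInr q x
  have hinl'' : ∀ y z, glueInl v r y = glueInl v r z ↔ y = z :=
    fun y z => (glueInl_injective v r).eq_iff
  have hinr'' : ∀ y z, glueInr q x y = glueInr q x z ↔ y = z := fun y z => hinr'.eq_iff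
  have hne'' := glueInl_ne_glueInr v r
  have hpx : ∀ y, H.pairing y = x ↔ y = H.pairing x :=
    fun y => ⟨fun h => by rw [← h, H.invol], fun h => by rw [h, H.invol]⟩
  have hpv : ∀ y, H.pairing y = v ↔ y = H.pairing v :=
    fun y => ⟨fun h => by rw [← h, H.invol], fun h => by rw [h, H.invol]⟩
  have hv := H.fixfree v
  have hxx := H.fixfree x
  have hLq := L.fixfree q
  refine isIso_glue_of_maps (fun y => glueInl (glueInr q x v) r (glueInl q x y))
    (glueElim v r (fun y => glueInl (glueInr q x v) r (glueInr q x y))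
      (glueInr (glueInr q x v) r))
    (hinl.comp hinl') (glueElim_injective (hinl.comp hinr') hinr fun _ => hne _)
    (fun y => forall_glue_V.2 ⟨fun a h => hne' _ _ (hinl h), fun a => hne _ _⟩) ?_
    (fun _ _ => rfl) (fun c => forall_glue_V.2 ⟨fun _ => rfl, fun _ => rfl⟩) ?_ ?_ ?_ ?_
  · rw [b_glue, b_glue, b_glue, add_assoc]
  · simp only [glue_pairing_glueInl, glue_pairing_glueInr, glueElim_glueInl]
    grind
  · simp only [glue_pairing_glueInl, glue_pairing_glueInr,
      apply_ite (glueElim v r (fun y => glueInl (glueInr q x v) r (glueInr q x y))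
        (glueInr (glueInr q x v) r)), glueElim_glueInl, glueElim_glueInr]
    grind
  · intro y h1 h2
    simp only [glue_pairing_glueInl, glue_pairing_glueInr]
    grind
  · refine forall_glue_V.2 ⟨fun y h1 h2 => ?_, fun y h1 h2 => ?_⟩
    · rw [glue_pairing_glueInl] at h2
      simp only [glue_pairing_glueInl, glue_pairing_glueInr,
        apply_ite (glueElim v r (fun y => glueInl (glueInr q x v) r (glueInr q x y))
          (glueInr (glueInr q x v) r)), glueElim_glueInl, glueElim_glueInr]
      grind
    · rw [glue_pairing_glueInl] at h2
      simp only [glue_pairing_glueInr,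
        apply_ite (glueElim v r (fun y => glueInl (glueInr q x v) r (glueInr q x y))
          (glueInr (glueInr q x v) r)), glueElim_glueInl, glueElim_glueInr]
      grind

theorem exists_isIso_glue_assoc {L : TGraph} (q : L.V) (x v : H.V) (r : K.V) :
    ∃ v' r', IsIso (glue L (glue H K v r) q (glueInl v r x)) (glue (glue L H q x) K v' r') := by
  by_cases hx : x = v
  · obtain ⟨e, he⟩ := exists_iso_glue_swap v r
    have h := isIso_glue_congr (Iso.refl L) e q (glueInl v r x)
    rw [he] at h
    refine ⟨_, _, h.trans (isIso_glue_assoc_of_ne q (v := H.pairing v) ?_ (K.pairing r))⟩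
    rw [hx]
    exact (H.fixfree v).symm
  · exact ⟨_, _, isIso_glue_assoc_of_ne q hx r⟩

end Glue

section Base

theorem finrank_faceFun_eq_card {G : TGraph} {c : Fin 3} {ι : Type*} [Fintype ι] (φ : G.V → ι)
    (s : ι → G.V) (hs : ∀ i, φ (s i) = i) (hp : ∀ v, φ (G.pairing v) = φ v)
    (hc : ∀ v, φ (G.colPerm c v) = φ v)
    (h : ∀ v, v = s (φ v) ∨ v = G.pairing (s (φ v)) ∨ v = G.colPerm c (s (φ v)) ∨
      v = G.pairing (G.colPerm c (s (φ v)))) :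
    Module.finrank (ZMod 2) (G.faceFun c) = Fintype.card ι := by
  let L : (ι → ZMod 2) →ₗ[ZMod 2] G.faceFun c :=
    { toFun := fun f => ⟨fun v => f (φ v), fun v => congrArg f (hp v), fun v => congrArg f (hc v)⟩
      map_add' := fun _ _ => rfl
      map_smul' := fun _ _ => rfl }
  have hL : Function.Bijective L := by
    refine ⟨fun f g hfg => funext fun i => ?_, fun f => ⟨fun i => f.1 (s i), ?_⟩⟩
    · have : f (φ (s i)) = g (φ (s i)) := congrFun (congrArg Subtype.val hfg) (s i)
      rwa [hs] at this
    · refine Subtype.ext (funext fun v => ?_)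
      change f.1 (s (φ v)) = f.1 v
      rcases h v with h | h | h | h
      · rw [← h]
      · conv_rhs => rw [h]
        rw [f.2.1]
      · conv_rhs => rw [h]
        rw [f.2.2]
      · conv_rhs => rw [h]
        rw [f.2.1, f.2.2]
  rw [← (LinearEquiv.ofBijective L hL).finrank_eq, Module.finrank_fintype_fun_eq_card]

theorem F_G2 : G2.F = 6 := by
  have h (c : Fin 3) : Module.finrank (ZMod 2) (G2.faceFun c) = 2 := by
    let φ : G2.V → Fin 2 := fun v => if v.2 = 0 ∨ v.2 = bubblePerm c 0 then 0 else 1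
    let s : Fin 2 → G2.V := fun i => ((0 : Fin 2), if i = 0 then 0 else bubblePerm (c + 1) 0)
    refine finrank_faceFun_eq_card φ s ?_ ?_ ?_ ?_ <;> revert c <;> decide
  rw [F_eq, Fin.sum_univ_three, h, h, h]

theorem F_G1 (c : Fin 3) : (G1 c).F = 4 := by
  have h1 : Module.finrank (ZMod 2) ((G1 c).faceFun c) = 2 := by
    let φ : (G1 c).V → Fin 2 := fun v => if v.2 = 0 ∨ v.2 = bubblePerm c 0 then 0 else 1
    let s : Fin 2 → (G1 c).V := fun i => ((0 : Fin 1), if i = 0 then 0 else bubblePerm (c + 1) 0)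
    refine finrank_faceFun_eq_card φ s ?_ ?_ ?_ ?_ <;> revert c <;> decide
  have h2 (d : Fin 3) (hd : d ≠ c) : Module.finrank (ZMod 2) ((G1 c).faceFun d) = 1 := by
    let s : Unit → (G1 c).V := fun _ => ((0 : Fin 1), 0)
    refine finrank_faceFun_eq_card (fun _ => ()) s (fun _ => rfl) (fun _ => rfl)
      (fun _ => rfl) ?_
    clear h1
    revert c d
    decide
  rw [F_eq, Fin.sum_univ_three]
  fin_cases c
  · exact congrArg₂ _ (congrArg₂ _ h1 (h2 1 (by decide))) (h2 2 (by decide))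
  · exact congrArg₂ _ (congrArg₂ _ (h2 0 (by decide)) h1) (h2 2 (by decide))
  · exact congrArg₂ _ (congrArg₂ _ (h2 0 (by decide)) (h2 1 (by decide))) h1

theorem b_G2 : G2.b = 2 := rfl

theorem b_G1 (c : Fin 3) : (G1 c).b = 1 := rfl

theorem two_mul_F_of_isMelonic {G : TGraph} (hG : IsMelonic G) : 2 * G.F = 3 * G.b + 6 := by
  induction hG with
  | base h => rw [h.F_eq, h.b_eq, F_G2, b_G2]
  | @insert G hG v H h ih =>
    have h1 : (G.insertDipole v).F + 3 = G.F + G2.F := F_glue v _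
    have h2 : (G.insertDipole v).b = G.b + G2.b := b_glue v _
    rw [F_G2] at h1
    rw [b_G2] at h2
    rw [h.F_eq, h.b_eq]
    omega

theorem two_mul_F_of_isDecoratedTadpole {G : TGraph} (hG : IsDecoratedTadpole G) :
    2 * G.F = 3 * G.b + 5 := by
  induction hG with
  | base c h => rw [h.F_eq, h.b_eq, F_G1, b_G1]
  | @insert G hG v H h ih =>
    have h1 : (G.insertDipole v).F + 3 = G.F + G2.F := F_glue v _
    have h2 : (G.insertDipole v).b = G.b + G2.b := b_glue v _
    rw [F_G2] at h1
    rw [b_G2] at h2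
    rw [h.F_eq, h.b_eq]
    omega

end Base

section Melonic

/-- The automorphism group of `G2` acts transitively on the vertices. -/
theorem exists_iso_G2 (y : G2.V) :
    ∃ e : Iso G2 G2, e.toEquiv y = ((0 : Fin 2), (0 : Fin 4)) := by
  obtain ⟨i, k⟩ := y
  have hk : ∀ k : Fin 4, ∃ f : Equiv.Perm (Fin 4), f k = 0 ∧
      ∀ c l, f (bubblePerm c l) = bubblePerm c (f l) := by
    intro k
    fin_cases k
    · exact ⟨1, by decide, by decide⟩
    · exact ⟨bubblePerm 0, by decide, by decide⟩
    · exact ⟨bubblePerm 1, by decide, by decide⟩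
    · exact ⟨bubblePerm 2, by decide, by decide⟩
  have hi : ∀ i : Fin 2, ∃ g : Equiv.Perm (Fin 2), g i = 0 ∧
      ∀ j, g (Equiv.swap 0 1 j) = Equiv.swap 0 1 (g j) := by decide
  obtain ⟨f, hf, hfc⟩ := hk k
  obtain ⟨g, hg, hgs⟩ := hi i
  exact ⟨⟨g.prodCongr f, fun v => Prod.ext (hgs v.1) rfl, fun c v => Prod.ext rfl (hfc c v.2)⟩,
    Prod.ext hg hf⟩

/-- A class of graphs closed under isomorphisms and insertion of melonic dipoles is closed under
insertion of melonic graphs. -/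
theorem IsMelonic.glue_induction {P : TGraph → Prop} (hiso : ∀ {G H}, P G → IsIso H G → P H)
    (hins : ∀ {G : TGraph} (v : G.V), P G → P (G.insertDipole v)) {M : TGraph}
    (hM : IsMelonic M) : ∀ {K : TGraph}, P K → ∀ (q : K.V) (p : M.V), P (glue K M q p) := by
  have hG2 : ∀ {K : TGraph}, P K → ∀ (q : K.V) (y : G2.V), P (glue K G2 q y) := by
    intro K hK q y
    obtain ⟨e, he⟩ := exists_iso_G2 y
    have h := isIso_glue_congr (Iso.refl K) e q y
    rw [he] at h
    exact hiso (hins q hK) h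
  induction hM with
  | base h =>
    intro K hK q p
    obtain ⟨e⟩ := h
    exact hiso (hG2 hK _ _) (isIso_glue_congr (Iso.refl K) e q p)
  | @insert G _ v H h ih =>
    intro K hK q p
    obtain ⟨e⟩ := h
    refine hiso ?_ (isIso_glue_congr (Iso.refl K) e q p)
    change P (glue K (glue G G2 v ((0 : Fin 2), (0 : Fin 4))) q (e.toEquiv p))
    generalize e.toEquiv p = z
    revert z
    refine forall_glue_V.2 ⟨fun x => ?_, fun y => ?_⟩
    · obtain ⟨v', r', h'⟩ := exists_isIso_glue_assoc (K := G2) q x v ((0 : Fin 2), (0 : Fin 4))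
      exact hiso (hG2 (ih hK q x) _ _) h'
    · obtain ⟨e', he'⟩ := exists_iso_glue_comm (K := G2) v ((0 : Fin 2), (0 : Fin 4))
      have h1 := isIso_glue_congr (Iso.refl K) e' q (glueInr v _ y)
      rw [he'] at h1
      obtain ⟨v', r', h'⟩ := exists_isIso_glue_assoc (H := G2) q y ((0 : Fin 2), (0 : Fin 4)) v
      exact hiso (hiso (ih (hG2 hK q y) v' r') h') h1

theorem IsMelonic.of_isIso {G H : TGraph} (hG : IsMelonic G) (h : IsIso H G) : IsMelonic H := by
  cases hG with
  | base h' => exact .base (h.trans h')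
  | insert hG v h' => exact .insert hG v (h.trans h')

theorem isDecoratedTadpole_of_isIso {G H : TGraph} (hG : IsDecoratedTadpole G)
    (h : IsIso H G) : IsDecoratedTadpole H := by
  cases hG with
  | base c h' => exact .base c (h.trans h')
  | insert hG v h' => exact .insert hG v (h.trans h')

end Melonic

section Cut

theorem connected_of_root {G : TGraph} (u : G.V) (h : ∀ P : G.V → Prop,
    (∀ v, P v → P (G.pairing v)) → (∀ c v, P v → P (G.colPerm c v)) → P u → ∀ v, P v) :
    G.Connected := by
  refine (connected_iff G).2 fun P hp hc x y hx => ?_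
  by_cases hu : P u
  · exact h P hp hc hu y
  · refine absurd hx (h (fun v => ¬ P v) (fun v hv hv' => hv ?_) (fun c v hv hv' => hv ?_) hu x)
    · simpa [G.invol] using hp _ hv'
    · simpa [G.colPerm_invol] using hc c _ hv'

theorem restrictFun_involutive {β : Type*} {π : Equiv.Perm (β × Fin 4)} (hπ : ∀ v, π (π v) = v)
    {S : β → Prop} (hS : ∀ v : β × Fin 4, S v.1 → S (π v).1) :
    Function.Involutive fun v : {x // S x} × Fin 4 =>
      ((⟨(π (v.1.1, v.2)).1, hS (v.1.1, v.2) v.1.2⟩, (π (v.1.1, v.2)).2) : {x // S x} × Fin 4) :=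
  fun v => by simp [hπ]

/-- The graph on a set of bubbles that is stable under a modified pairing. -/
noncomputable def restrict (G : TGraph) (π : Equiv.Perm G.V) (hπ : ∀ v, π (π v) = v)
    (hπ' : ∀ v, π v ≠ v) (S : G.B → Prop) (hS : ∀ v : G.V, S v.1 → S (π v).1) : TGraph where
  B := {x // S x}
  fintypeB := Fintype.ofFinite _
  pairing :=
    (restrictFun_involutive hπ hS).toPerm
  invol := restrictFun_involutive hπ hS
  fixfree v h := by
    refine hπ' (v.1.1, v.2) (Prod.ext ?_ ?_)
    · exact congrArg (fun x => x.1.1) h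
    · exact congrArg (fun x => x.2) h

section Restrict

variable {G : TGraph} {π : Equiv.Perm G.V} {hπ : ∀ v, π (π v) = v} {hπ' : ∀ v, π v ≠ v}
  {S : G.B → Prop} {hS : ∀ v : G.V, S v.1 → S (π v).1}

variable (hπ hπ' hS) in
/-- The inclusion of the vertices of a restricted graph. -/
def restrictIncl (v : (G.restrict π hπ hπ' S hS).V) : G.V := (v.1.1, v.2)

theorem restrictIncl_injective : Function.Injective (restrictIncl hπ hπ' hS) := fun _ _ h =>
  Prod.ext (Subtype.ext (congrArg Prod.fst h)) (congrArg (fun v : G.V => v.2) h)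

theorem restrictIncl_mem (v : (G.restrict π hπ hπ' S hS).V) : S (restrictIncl hπ hπ' hS v).1 :=
  v.1.2

theorem exists_restrictIncl {v : G.V} (hv : S v.1) : ∃ x, restrictIncl hπ hπ' hS x = v :=
  ⟨(⟨v.1, hv⟩, v.2), rfl⟩

theorem b_restrict_add_b_restrict {hS' : ∀ v : G.V, ¬ S v.1 → ¬ S (π v).1} :
    G.b = (G.restrict π hπ hπ' S hS).b + (G.restrict π hπ hπ' (fun x => ¬ S x) hS').b := by
  classical
  simp only [b, ← Nat.card_eq_fintype_card]
  rw [← Nat.card_congr (Equiv.sumCompl S), Nat.card_sum]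
  rfl

end Restrict

/-- A connected graph that is disconnected by a flip is obtained by gluing two connected
graphs. -/
theorem Connected.exists_isIso_glue {G : TGraph} (hG : G.Connected) {u w : G.V} (huw : u ≠ w)
    (h : ¬ (G.flip u w).Connected) :
    ∃ (A B : TGraph) (a : A.V) (b : B.V), A.Connected ∧ B.Connected ∧ IsIso G (glue A B a b) := by
  let π : Equiv.Perm G.V := (G.flip u w).pairing
  have hπ : ∀ v, π (π v) = v := (G.flip u w).invol
  have hπ' : ∀ v, π v ≠ v := (G.flip u w).fixfree
  have πu : π u = w := flip_pairing_left huw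
  have πpu : π (G.pairing u) = G.pairing w := flip_pairing_pairing_left huw
  have πpw : π (G.pairing w) = G.pairing u := flip_pairing_pairing_right huw
  have πv : ∀ v, v ≠ u → v ≠ w → v ≠ G.pairing u → v ≠ G.pairing w → π v = G.pairing v :=
    fun v => flip_pairing_of_ne
  let T : G.V → Prop := fun v => ∀ P : G.V → Prop, (∀ v, P v → P (π v)) →
    (∀ c v, P v → P (G.colPerm c v)) → P u → P v
  have Tu : T u := fun P _ _ hu => hu
  have Tπ : ∀ v, T v → T (π v) := fun v hv P h1 h2 h3 => h1 _ (hv P h1 h2 h3)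
  have Tc : ∀ c v, T v → T (G.colPerm c v) := fun c v hv P h1 h2 h3 => h2 _ _ (hv P h1 h2 h3)
  have Tπ' : ∀ v, T (π v) → T v := fun v hv => by simpa [hπ] using Tπ _ hv
  have Tbub : ∀ {v v' : G.V}, v'.1 = v.1 → T v → T v' := by
    intro v v' hvv hv
    rcases G.eq_or_eq_colPerm hvv with rfl | ⟨c, rfl⟩
    · exact hv
    · exact Tc c v hv
  have Tw : T w := πu ▸ Tπ u Tu
  have Tpu : ¬ T (G.pairing u) := by
    intro hpu
    have hpw : T (G.pairing w) := πpu ▸ Tπ _ hpu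
    have hT : ∀ v, T v := fun v => (connected_iff G).1 hG T (fun v hv => by
      by_cases h1 : v = u
      · rwa [h1]
      by_cases h2 : v = w
      · rwa [h2]
      by_cases h3 : v = G.pairing u
      · rwa [h3, G.invol]
      by_cases h4 : v = G.pairing w
      · rwa [h4, G.invol]
      rw [← πv v h1 h2 h3 h4]
      exact Tπ v hv) Tc u v Tu
    exact h (connected_of_root (G := G.flip u w) u fun P h1 h2 h3 v => hT v P h1 h2 h3)
  have Tpw : ¬ T (G.pairing w) := fun hpw => Tpu (πpw ▸ Tπ _ hpw)
  let S : G.B → Prop := fun x => T (x, 0)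
  have hST : ∀ v : G.V, S v.1 ↔ T v := fun v => ⟨Tbub rfl, Tbub rfl⟩
  have hS : ∀ v : G.V, S v.1 → S (π v).1 := fun v hv => (hST _).2 (Tπ v ((hST v).1 hv))
  have hS' : ∀ v : G.V, ¬ S v.1 → ¬ S (π v).1 := fun v hv hv' =>
    hv ((hST v).2 (Tπ' v ((hST _).1 hv')))
  let A := G.restrict π hπ hπ' S hS
  let B := G.restrict π hπ hπ' (fun x => ¬ S x) hS'
  let fA : A.V → G.V := restrictIncl hπ hπ' hS
  let fB : B.V → G.V := restrictIncl hπ hπ' hS'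
  have hfA : Function.Injective fA := restrictIncl_injective
  have hfB : Function.Injective fB := restrictIncl_injective
  have hTA : ∀ x, T (fA x) := fun x => (hST _).1 (restrictIncl_mem x)
  have hTB : ∀ y, ¬ T (fB y) := fun y hy => restrictIncl_mem y ((hST _).2 hy)
  have pA : ∀ x, fA (A.pairing x) = π (fA x) := fun _ => rfl
  have pB : ∀ y, fB (B.pairing y) = π (fB y) := fun _ => rfl
  have cA : ∀ c x, fA (A.colPerm c x) = G.colPerm c (fA x) := fun _ _ => rfl
  have cB : ∀ c y, fB (B.colPerm c y) = G.colPerm c (fB y) := fun _ _ => rfl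
  obtain ⟨a, ha⟩ : ∃ a, fA a = u := exists_restrictIncl ((hST u).2 Tu)
  obtain ⟨b, hb⟩ : ∃ b, fB b = G.pairing u := exists_restrictIncl (fun hu => Tpu ((hST _).1 hu))
  have ha' : fA (A.pairing a) = w := by rw [pA, ha, πu]
  have hb' : fB (B.pairing b) = G.pairing w := by rw [pB, hb, πpu]
  have πB : ∀ y, y ≠ b → y ≠ B.pairing b → G.pairing (fB y) = fB (B.pairing y) := by
    intro y h1 h2
    rw [pB, πv _ (fun e => hTB y (by rwa [e])) (fun e => hTB y (by rwa [e]))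
      (fun e => h1 (hfB (e.trans hb.symm))) (fun e => h2 (hfB (e.trans hb'.symm)))]
  have πA : ∀ x, x ≠ a → x ≠ A.pairing a → G.pairing (fA x) = fA (A.pairing x) := by
    intro x h1 h2
    rw [pA, πv _ (fun e => h1 (hfA (e.trans ha.symm))) (fun e => h2 (hfA (e.trans ha'.symm)))
      (fun e => Tpu (e ▸ hTA x)) (fun e => Tpw (e ▸ hTA x))]
  refine ⟨A, B, a, b, connected_of_root a fun P h1 h2 h3 v => ?_,
    connected_of_root b fun P h1 h2 h3 v => ?_, ?_⟩
  · obtain ⟨x, hx, hPx⟩ := hTA v (fun z => ∃ x, fA x = z ∧ P x)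
      (by rintro _ ⟨x, rfl, hx⟩; exact ⟨_, pA x, h1 x hx⟩)
      (by rintro c _ ⟨x, rfl, hx⟩; exact ⟨_, cA c x, h2 c x hx⟩) ⟨a, ha, h3⟩
    exact hfA hx ▸ hPx
  · have key := (connected_iff G).1 hG (fun z => T z ∨ ∃ y, fB y = z ∧ P y) ?_ ?_ u (fB v) (Or.inl Tu)
    · obtain ⟨y, hy, hPy⟩ := key.resolve_left (hTB v)
      exact hfB hy ▸ hPy
    · rintro z (hz | ⟨y, rfl, hy⟩)
      · by_cases e1 : z = u
        · exact Or.inr ⟨b, by rw [hb, e1], h3⟩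
        by_cases e2 : z = w
        · exact Or.inr ⟨B.pairing b, by rw [hb', e2], h1 b h3⟩
        rw [← πv z e1 e2 (fun e => Tpu (e ▸ hz)) (fun e => Tpw (e ▸ hz))]
        exact Or.inl (Tπ z hz)
      · by_cases e1 : y = b
        · rw [e1, hb, G.invol]
          exact Or.inl Tu
        by_cases e2 : y = B.pairing b
        · rw [e2, hb', G.invol]
          exact Or.inl Tw
        exact Or.inr ⟨_, (πB y e1 e2).symm, h1 y hy⟩
    · rintro c z (hz | ⟨y, rfl, hy⟩)
      · exact Or.inl (Tc c z hz)
      · exact Or.inr ⟨_, cB c y, h2 c y hy⟩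
  · refine IsIso.symm (isIso_glue_of_maps fA fB hfA hfB (fun x y e => hTB y (e ▸ hTA x))
      b_restrict_add_b_restrict cA cB (by rw [ha, hb]) (by rw [ha', hb']) πA πB)

end Cut

section Classification

variable {G : TGraph}

theorem exists_third {c i : Fin 3} (h : c ≠ i) : ∃ j, c ≠ j ∧ i ≠ j := by
  revert c i; decide

theorem one_le_b (v : G.V) : 1 ≤ G.b := Fintype.card_pos_iff.2 ⟨v.1⟩

theorem F_eq_zero (h : ¬ Nonempty G.B) : G.F = 0 := by
  rw [F_eq]
  refine Finset.sum_eq_zero fun c _ => Nat.le_zero.1 ?_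
  have h1 := Submodule.finrank_le (G.faceFun c)
  have h2 : Fintype.card G.B = 0 := Fintype.card_eq_zero_iff.2 (not_nonempty_iff.1 h)
  rwa [Module.finrank_fintype_fun_eq_card, card_V, b, h2] at h1

theorem Connected.two_mul_F_le (hG : G.Connected) : 2 * G.F ≤ 3 * G.b + 6 := by
  by_cases hB : Nonempty G.B
  · have h1 := Connected.finrank_faceFun_add_le hG (c := 0) (d := 1) (e := 2) (by decide)
      (by decide) (by decide)
    have h2 := Connected.finrank_faceFun_add_le hG (c := 0) (d := 2) (e := 1) (by decide)
      (by decide) (by decide)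
    have h3 := Connected.finrank_faceFun_add_le hG (c := 1) (d := 2) (e := 0) (by decide)
      (by decide) (by decide)
    rw [F_eq, Fin.sum_univ_three]
    omega
  · rw [F_eq_zero hB]
    omega

/-- With at least `3 b / 2 + 5 / 2` faces, some jacket is planar and the faces of the remaining
color are short on average. -/
theorem Connected.exists_planar_jacket [Nonempty G.B] (hG : G.Connected)
    (h : 3 * G.b + 5 ≤ 2 * G.F) : ∃ c d e : Fin 3, c ≠ d ∧ c ≠ e ∧ d ≠ e ∧
      Module.finrank (ZMod 2) (G.faceFun d) + Module.finrank (ZMod 2) (G.faceFun e) = G.b + 2 ∧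
      G.b + 1 ≤ 2 * G.numFaces c := by
  have h1 := Connected.finrank_faceFun_add_le hG (c := 0) (d := 1) (e := 2) (by decide)
    (by decide) (by decide)
  have h2 := Connected.finrank_faceFun_add_le hG (c := 0) (d := 2) (e := 1) (by decide)
    (by decide) (by decide)
  have h3 := Connected.finrank_faceFun_add_le hG (c := 1) (d := 2) (e := 0) (by decide)
    (by decide) (by decide)
  rw [F_eq, Fin.sum_univ_three] at h
  simp only [← finrank_faceFun]
  by_cases h12 : Module.finrank (ZMod 2) (G.faceFun 1) + Module.finrank (ZMod 2) (G.faceFun 2) =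
      G.b + 2 ∧ G.b + 1 ≤ 2 * Module.finrank (ZMod 2) (G.faceFun 0)
  · exact ⟨0, 1, 2, by decide, by decide, by decide, h12⟩
  by_cases h02 : Module.finrank (ZMod 2) (G.faceFun 0) + Module.finrank (ZMod 2) (G.faceFun 2) =
      G.b + 2 ∧ G.b + 1 ≤ 2 * Module.finrank (ZMod 2) (G.faceFun 1)
  · exact ⟨1, 0, 2, by decide, by decide, by decide, h02⟩
  · exact ⟨2, 0, 1, by decide, by decide, by decide, by omega⟩

/-- A connected graph with a self-contraction of a bubble in which two edges of the same color
carry parallel propagators is a double tadpole. -/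
theorem Connected.isIso_G1 (hG : G.Connected) {v : G.V} {c i : Fin 3} (hci : c ≠ i)
    (hv : G.pairing v = G.colPerm i v)
    (hc : G.pairing (G.colPerm c v) = G.colPerm c (G.pairing v)) : IsIso G (G1 i) := by
  obtain ⟨j, hcj, hij⟩ := exists_third hci
  have key : ∀ x : G.V, x.1 = v.1 → G.pairing x = G.colPerm i x := by
    have hcv : G.pairing (G.colPerm c v) = G.colPerm j v := by
      rw [hc, hv, G.colPerm_colPerm hci hcj hij]
    intro x hx
    rcases G.eq_or_eq_colPerm hx with rfl | ⟨k, rfl⟩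
    · exact hv
    · have hk : k = c ∨ k = i ∨ k = j := by
        clear hv hc hcv hx
        revert c i j k; decide
      rcases hk with rfl | rfl | rfl
      · rw [hcv, G.colPerm_colPerm hci.symm hij hcj]
      · rw [← hv, G.invol, hv, G.colPerm_invol]
      · rw [← hcv, G.invol, hcv, G.colPerm_colPerm hij hci.symm hcj.symm]
  have hbub : ∀ x : G.V, x.1 = v.1 := fun x =>
    (connected_iff G).1 hG (fun x => x.1 = v.1) (fun x hx => by rw [key x hx]; exact hx)
      (fun _ _ hx => hx) v x rfl
  let e : G.B ≃ Fin 1 :=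
    { toFun := fun _ => 0
      invFun := fun _ => v.1
      left_inv := fun x => (hbub (x, 0)).symm
      right_inv := fun x => Subsingleton.elim _ _ }
  refine ⟨⟨e.prodCongr (Equiv.refl _), fun x => ?_, fun _ _ => rfl⟩⟩
  rw [key x (hbub x)]
  rfl

/-- A connected graph in which two bubbles are joined by four parallel propagators is `G2`. -/
theorem Connected.isIso_G2 (hG : G.Connected) {v : G.V} (hv : (G.pairing v).1 ≠ v.1)
    (hc : ∀ c, G.pairing (G.colPerm c v) = G.colPerm c (G.pairing v)) : IsIso G G2 := by
  have key : ∀ x : G.V, x.1 = v.1 → ∀ c, G.pairing (G.colPerm c x) = G.colPerm c (G.pairing x) := by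
    intro x hx c
    rcases G.eq_or_eq_colPerm hx with rfl | ⟨k, rfl⟩
    · exact hc c
    · by_cases hk : c = k
      · rw [hk, G.colPerm_invol, hc, G.colPerm_invol]
      · obtain ⟨j, hcj, hkj⟩ := exists_third hk
        rw [G.colPerm_colPerm hk hcj hkj, hc, hc, G.colPerm_colPerm hk hcj hkj]
  have hbub : ∀ x : G.V, x.1 = v.1 → (G.pairing x).1 = (G.pairing v).1 := by
    intro x hx
    rcases G.eq_or_eq_colPerm hx with rfl | ⟨k, rfl⟩
    · rfl
    · rw [hc]; rfl
  let ψ : G2.V → G.V := fun y =>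
    (![(v.1, y.2), G.pairing (v.1, y.2)] : Fin 2 → G.V) y.1
  have ψ0 : ∀ k : Fin 4, ψ ((0 : Fin 2), k) = (v.1, k) := fun _ => rfl
  have ψ1 : ∀ k : Fin 4, ψ ((1 : Fin 2), k) = G.pairing (v.1, k) := fun _ => rfl
  have hp : ∀ y, ψ (G2.pairing y) = G.pairing (ψ y) := by
    rintro ⟨i, k⟩
    change Fin 2 at i
    fin_cases i
    · exact (ψ1 k).trans (congrArg G.pairing (ψ0 k).symm)
    · exact (ψ0 k).trans ((G.invol _).symm.trans (congrArg G.pairing (ψ1 k).symm))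
  have hcol : ∀ c y, ψ (G2.colPerm c y) = G.colPerm c (ψ y) := by
    rintro c ⟨i, k⟩
    change Fin 2 at i
    fin_cases i
    · rfl
    · exact (ψ1 (bubblePerm c k)).trans
        ((key (v.1, k) rfl c).trans (congrArg (G.colPerm c) (ψ1 k).symm))
  have hne : ∀ k l : Fin 4, ψ ((0 : Fin 2), k) ≠ ψ ((1 : Fin 2), l) := fun k l h => by
    rw [ψ0, ψ1] at h
    exact hv ((hbub (v.1, l) rfl).symm.trans (congrArg Prod.fst h).symm)
  have hinj : Function.Injective ψ := by
    rintro ⟨i, k⟩ ⟨j, l⟩ h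
    change Fin 2 at i j
    fin_cases i <;> fin_cases j
    · exact Prod.ext rfl (congrArg (fun x : G.V => x.2) (((ψ0 k).symm.trans h).trans (ψ0 l)))
    · exact absurd h (hne k l)
    · exact absurd h.symm (hne l k)
    · exact Prod.ext rfl (congrArg (fun x : G.V => x.2)
        (G.pairing.injective (((ψ1 k).symm.trans h).trans (ψ1 l))))
  have hsurj : Function.Surjective ψ := fun x =>
    (connected_iff G).1 hG (fun x => ∃ y, ψ y = x)
      (by rintro _ ⟨y, rfl⟩; exact ⟨_, hp y⟩) (by rintro c _ ⟨y, rfl⟩; exact ⟨_, hcol c y⟩)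
      v x ⟨((0 : Fin 2), v.2), ψ0 _⟩
  exact IsIso.symm ⟨⟨Equiv.ofBijective ψ ⟨hinj, hsurj⟩, hp, hcol⟩⟩

/-- In a connected graph with many faces, a face of length two that is not
adjacent to another face of length two gives rise to a two-edge-cut. -/
theorem Connected.exists_isIso_glue_of_face (hG : G.Connected) (h : 3 * G.b + 5 ≤ 2 * G.F)
    {c d e : Fin 3} (hcd : c ≠ d) (hce : c ≠ e) (hde : d ≠ e) {v : G.V}
    (hc : G.pairing (G.colPerm c v) = G.colPerm c (G.pairing v))
    (hd : G.pairing (G.colPerm d v) ≠ G.colPerm d (G.pairing v)) :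
    ∃ (A B : TGraph) (a : A.V) (b : B.V), A.Connected ∧ B.Connected ∧ IsIso G (glue A B a b) := by
  have hne : G.colPerm d v ≠ G.colPerm d (G.pairing v) := fun h =>
    G.fixfree v ((G.colPerm d).injective h).symm
  refine Connected.exists_isIso_glue hG hne fun hcon => ?_
  have h1 := F_lt_F_flip hcd hce hde hc hne hd
  have h2 := Connected.two_mul_F_le hcon
  change _ ≤ 3 * G.b + 6 at h2
  omega

theorem Connected.isMelonic_or_isDecoratedTadpole (hG : G.Connected)
    (h : 3 * G.b + 5 ≤ 2 * G.F) : IsMelonic G ∨ IsDecoratedTadpole G := by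
  induction hn : G.b using Nat.strong_induction_on generalizing G with
  | _ n ih =>
    have hB : Nonempty G.B := by
      by_contra hB
      rw [F_eq_zero hB] at h
      omega
    obtain ⟨c, d, e, hcd, hce, hde, hpl, hc⟩ := Connected.exists_planar_jacket hG h
    obtain ⟨s, hsp, hsc⟩ := Connected.exists_twoColoring hG hde hcd.symm hce.symm hpl
    obtain ⟨v, hv⟩ := exists_pairing_colPerm hsp hsc hc
    by_cases hbub : (G.pairing v).1 = v.1
    · obtain ⟨i, hi⟩ := (G.eq_or_eq_colPerm hbub).resolve_left (G.fixfree v)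
      refine Or.inr (.base i (Connected.isIso_G1 hG ?_ hi hv))
      rintro rfl
      have := hsp v
      rw [hi, hsc] at this
      simp at this
    have hglue : (∀ k, G.pairing (G.colPerm k v) = G.colPerm k (G.pairing v)) ∨
        ∃ (A B : TGraph) (a : A.V) (b : B.V), A.Connected ∧ B.Connected ∧
          IsIso G (glue A B a b) := by
      by_cases hd : G.pairing (G.colPerm d v) = G.colPerm d (G.pairing v)
      · by_cases he : G.pairing (G.colPerm e v) = G.colPerm e (G.pairing v)
        · refine Or.inl fun k => ?_
          have hk : k = c ∨ k = d ∨ k = e := by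
            clear * - hcd hce hde
            revert c d e k; decide
          rcases hk with rfl | rfl | rfl
          exacts [hv, hd, he]
        · exact Or.inr (Connected.exists_isIso_glue_of_face hG h hce hcd hde.symm hv he)
      · exact Or.inr (Connected.exists_isIso_glue_of_face hG h hcd hce hde hv hd)
    rcases hglue with hall | ⟨A, B, a, b, hA, hB, hiso⟩
    · exact Or.inl (.base (Connected.isIso_G2 hG hbub hall))
    have hF := F_glue a b
    have hb := b_glue a b
    rw [← IsIso.F_eq hiso] at hF
    rw [← IsIso.b_eq hiso] at hb
    have hA1 := one_le_b a
    have hB1 := one_le_b b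
    have hA2 := Connected.two_mul_F_le hA
    have hB2 := Connected.two_mul_F_le hB
    rcases ih A.b (by omega) hA (by omega) rfl with hAm | hAd <;>
      rcases ih B.b (by omega) hB (by omega) rfl with hBm | hBd
    · exact Or.inl (IsMelonic.of_isIso (IsMelonic.glue_induction (P := IsMelonic)
        IsMelonic.of_isIso (fun v hM => .insert hM v ⟨Iso.refl _⟩) hBm hAm a b) hiso)
    · obtain ⟨e, -⟩ := exists_iso_glue_comm a b
      exact Or.inr (isDecoratedTadpole_of_isIso (IsMelonic.glue_induction (P := IsDecoratedTadpole)
        isDecoratedTadpole_of_isIso (fun v hM => .insert hM v ⟨Iso.refl _⟩) hAm hBd b a)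
        (IsIso.trans hiso ⟨e⟩))
    · exact Or.inr (isDecoratedTadpole_of_isIso (IsMelonic.glue_induction (P := IsDecoratedTadpole)
        isDecoratedTadpole_of_isIso (fun v hM => .insert hM v ⟨Iso.refl _⟩) hBm hAd a b) hiso)
    · have h1 := two_mul_F_of_isDecoratedTadpole hAd
      have h2 := two_mul_F_of_isDecoratedTadpole hBd
      omega

end Classification

end TGraph

/-- In the free energy expansion of the `O(N)^3` tetrahedral
tensor model, the exponent `F(G) - (3/2) b(G)` of `N` is at most 3 for every
connected graph, with equality exactly for melonic graphs; the next largest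
exponent is `5/2`, attained exactly by the melon-decorated double tadpoles. -/
theorem exponent_classification (G : TGraph) (hG : G.Connected) :
    (G.F : ℚ) - 3 / 2 * G.b ≤ 3 ∧
      ((G.F : ℚ) - 3 / 2 * G.b = 3 ↔ IsMelonic G) ∧
      (¬ IsMelonic G → (G.F : ℚ) - 3 / 2 * G.b ≤ 5 / 2) ∧
      ((G.F : ℚ) - 3 / 2 * G.b = 5 / 2 ↔ IsDecoratedTadpole G) := by
  have hle := TGraph.Connected.two_mul_F_le hG
  have hclass := TGraph.Connected.isMelonic_or_isDecoratedTadpole hG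
  have hmel : IsMelonic G ↔ 2 * G.F = 3 * G.b + 6 := by
    refine ⟨two_mul_F_of_isMelonic, fun h => (hclass (by omega)).resolve_right fun hd => ?_⟩
    have := two_mul_F_of_isDecoratedTadpole hd
    omega
  have htad : IsDecoratedTadpole G ↔ 2 * G.F = 3 * G.b + 5 := by
    refine ⟨two_mul_F_of_isDecoratedTadpole, fun h => (hclass (by omega)).resolve_left fun hm => ?_⟩
    have := two_mul_F_of_isMelonic hm
    omega
  rw [hmel, htad]
  refine ⟨?_, ⟨fun h => ?_, fun h => ?_⟩, fun h => ?_, ⟨fun h => ?_, fun h => ?_⟩⟩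
  · have : (2 * G.F : ℚ) ≤ 3 * G.b + 6 := by exact_mod_cast hle
    linarith
  · have : (2 * G.F : ℚ) = 3 * G.b + 6 := by linarith
    exact_mod_cast this
  · have : (2 * G.F : ℚ) = 3 * G.b + 6 := by exact_mod_cast h
    linarith
  · have h' : 2 * G.F ≤ 3 * G.b + 5 := by omega
    have : (2 * G.F : ℚ) ≤ 3 * G.b + 5 := by exact_mod_cast h'
    linarith
  · have : (2 * G.F : ℚ) = 3 * G.b + 5 := by linarith
    exact_mod_cast this
  · have : (2 * G.F : ℚ) = 3 * G.b + 5 := by exact_mod_cast h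
    linarith
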